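/- For any translation-invariant Gibbs measure μ for the 1-2 model on the hexagonal lattice ℍ (with any weights a, b, c > 0) and any of the six local configuration types τ₀ ∈ {001, 010, 011, 100, 101, 110}, μ-almost every 1-2 model configuration ω ∈ Ω has at most one infinite τ₀-cluster. -/

import Mathlib

open MeasureTheory

/-- Vertices of the hexagonal lattice: `(x, y, t)` with `t = true` the "upper" vertex. -/
abbrev HexV : Type := ℤ × ℤ × Bool

/-- Edges of the hexagonal lattice: `(x, y, k)` with `k = 0` the a-type (horizontal) edge
joining `(x,y,1)` to `(x,y,0)`, `k = 1` the b-type edge joining `(x,y,1)` to `(x+1,y,0)`,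
`k = 2` the c-type edge joining `(x,y,1)` to `(x,y+1,0)`. -/
abbrev HexE : Type := ℤ × ℤ × Fin 3

/-- A configuration assigns present/absent to each edge. -/
abbrev Config : Type := HexE → Bool

def end1 (e : HexE) : HexV := (e.1, e.2.1, true)

def end2 (e : HexE) : HexV :=
  if e.2.2 = 0 then (e.1, e.2.1, false)
  else if e.2.2 = 1 then (e.1 + 1, e.2.1, false)
  else (e.1, e.2.1 + 1, false)

/-- The edges incident to a vertex, indexed so that index `0` is the a-type (horizontal)
edge, index `1` the b-type edge, index `2` the c-type edge. -/
def edgesAt (v : HexV) : Fin 3 → HexE := fun i =>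
  if v.2.2 then (v.1, v.2.1, i)
  else if i = 0 then (v.1, v.2.1, 0)
  else if i = 1 then (v.1 - 1, v.2.1, 1)
  else (v.1, v.2.1 - 1, 2)

/-- Local configuration of `ω` at `v`: digit `0` (rightmost) is the a-type edge,
digit `1` the b-type edge, digit `2` (leftmost) the c-type edge. -/
def localConf (ω : Config) (v : HexV) : Fin 3 → Bool := fun i => ω (edgesAt v i)

/-- A 1-2 model configuration: every vertex is incident to one or two present edges. -/
def IsConfig (ω : Config) : Prop :=
  ∀ v : HexV,
    1 ≤ (Finset.univ.filter fun i : Fin 3 => localConf ω v i = true).card ∧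
    (Finset.univ.filter fun i : Fin 3 => localConf ω v i = true).card ≤ 2

/-- The local configuration type `{001}` : only the a-type (horizontal) edge is present. -/
def conf001 : Fin 3 → Bool := ![true, false, false]

/-- The six admissible local configuration types `{001},…,{110}`. -/
def validConf (τ : Fin 3 → Bool) : Prop :=
  τ ≠ ![false, false, false] ∧ τ ≠ ![true, true, true]

/-- Vertex weight: `w(001)=w(110)=a`, `w(010)=w(101)=b`, `w(011)=w(100)=c`. -/
def weight (a b c : ℝ) (f : Fin 3 → Bool) : ℝ :=
  match f 2, f 1, f 0 with
  | false, false, true  => a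
  | true,  true,  false => a
  | false, true,  false => b
  | true,  false, true  => b
  | false, true,  true  => c
  | true,  false, false => c
  | false, false, false => 0
  | true,  true,  true  => 0

/-- Adjacency in the hexagonal lattice. -/
def HexAdj (v w : HexV) : Prop :=
  v ≠ w ∧ ∃ e : HexE, (v = end1 e ∨ v = end2 e) ∧ (w = end1 e ∨ w = end2 e)

/-- Adjacency restricted to a vertex set `S`. -/
def adjIn (S : Set HexV) (v w : HexV) : Prop := HexAdj v w ∧ v ∈ S ∧ w ∈ S

/-- The connected component of `v` in the subgraph induced on `S`. -/
def compOf (S : Set HexV) (v : HexV) : Set HexV := {w | Relation.ReflTransGen (adjIn S) v w}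

/-- `C` is a connected component of the subgraph induced on `S`. -/
def IsCompOf (S : Set HexV) (C : Set HexV) : Prop := ∃ v ∈ S, C = compOf S v

/-- Vertices whose local configuration equals `τ`. -/
def confSet (ω : Config) (τ : Fin 3 → Bool) : Set HexV := {v | localConf ω v = τ}

/-- A `τ`-cluster of `ω`. -/
def IsCluster (ω : Config) (τ : Fin 3 → Bool) (C : Set HexV) : Prop :=
  IsCompOf (confSet ω τ) C

/-- The number of infinite `τ`-clusters of `ω`, as an extended natural number. -/
noncomputable def numInfClusters (ω : Config) (τ : Fin 3 → Bool) : ℕ∞ :=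
  {C : Set HexV | IsCluster ω τ C ∧ C.Infinite}.encard

def endsFinset (e : HexE) : Finset HexV := {end1 e, end2 e}

/-- Vertices incident to an edge of `F`. -/
def verts (F : Finset HexE) : Finset HexV := F.biUnion endsFinset

/-- Edges sharing an endpoint with an edge of `F`. -/
def edgeNbhd (F : Finset HexE) : Set HexE :=
  {e' | ∃ e ∈ F,
    end1 e = end1 e' ∨ end1 e = end2 e' ∨ end2 e = end1 e' ∨ end2 e = end2 e'}

/-- Cylinder event: configurations agreeing with `σ` on `S`. -/
def cyl (S : Set HexE) (σ : Config) : Set Config := {ω | ∀ e ∈ S, ω e = σ e}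

/-- A Gibbs measure for the 1-2 model with weights `a`, `b`, `c`. -/
def IsGibbs (a b c : ℝ) (μ : Measure Config) : Prop :=
  IsProbabilityMeasure μ ∧ μ {ω | IsConfig ω} = 1 ∧
  ∀ F : Finset HexE, ∀ σ τ : Config, IsConfig σ → IsConfig τ →
    (∀ e ∉ F, σ e = τ e) →
    μ (cyl (↑F ∪ edgeNbhd F) σ) *
        ENNReal.ofReal (∏ v ∈ verts F, weight a b c (localConf τ v)) =
      μ (cyl (↑F ∪ edgeNbhd F) τ) *
        ENNReal.ofReal (∏ v ∈ verts F, weight a b c (localConf σ v))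

/-- Translation of edges by `g ∈ ℤ²`. -/
def shiftE (g : ℤ × ℤ) (e : HexE) : HexE := (e.1 + g.1, e.2.1 + g.2, e.2.2)

/-- Induced translation action on configurations. -/
def shiftConfig (g : ℤ × ℤ) (ω : Config) : Config := fun e => ω (shiftE g e)

/-- Translation invariance of a measure on configurations. -/
def TransInvariant (μ : Measure Config) : Prop :=
  ∀ g : ℤ × ℤ, μ.map (shiftConfig g) = μ

/-- Ergodicity: every translation-invariant measurable event has measure `0` or `1`. -/
def IsErgodicTI (μ : Measure Config) : Prop :=
  ∀ A : Set Config, MeasurableSet A → (∀ g, shiftConfig g ⁻¹' A = A) → μ A = 0 ∨ μ A = 1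

/-- The box `B_n(i,j)`. -/
def box (n : ℕ) (i j : ℤ) : Set HexV :=
  {v | |v.1 - i| ≤ (n : ℤ) ∧ |v.2.1 - j| ≤ (n : ℤ)}

/-- Vertices outside `B` adjacent to a vertex of `B`. -/
def outerBoundary (B : Set HexV) : Set HexV := {v | v ∉ B ∧ ∃ w ∈ B, HexAdj v w}

/-- `B_N(i,j)` is an encounter box for `ω` with respect to the infinite `{001}`-cluster `C`. -/
def IsEncounterBoxWrt (ω : Config) (N : ℕ) (i j : ℤ) (C : Set HexV) : Prop :=
  IsCluster ω conf001 C ∧ C.Infinite ∧ box N i j ⊆ C ∧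
  (∀ D, IsCompOf (C \ box (N + 2) i j) D → D.Infinite) ∧
  {D : Set HexV | IsCompOf (C \ box (N + 2) i j) D ∧ D.Infinite}.encard = 3

/-- `B_N(i,j)` is an encounter box for `ω`. -/
def IsEncounterBox (ω : Config) (N : ℕ) (i j : ℤ) : Prop :=
  ∃ C : Set HexV, IsEncounterBoxWrt ω N i j C

/-- A 3-partition of `Y`: an unordered triple of pairwise disjoint nonempty sets with union `Y`. -/
def IsThreePartition {α : Type*} (Y : Set α) (P : Set (Set α)) : Prop :=
  ∃ P₁ P₂ P₃ : Set α, P = {P₁, P₂, P₃} ∧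
    P₁.Nonempty ∧ P₂.Nonempty ∧ P₃.Nonempty ∧
    Disjoint P₁ P₂ ∧ Disjoint P₁ P₃ ∧ Disjoint P₂ P₃ ∧
    P₁ ∪ P₂ ∪ P₃ = Y

/-- Two 3-partitions are compatible if their parts can be ordered so that `Q₂ ∪ Q₃ ⊆ P₁`. -/
def CompatiblePartitions {α : Type*} (P Q : Set (Set α)) : Prop :=
  ∃ P₁ ∈ P, ∃ Q₁ ∈ Q, ∀ R ∈ Q, R ≠ Q₁ → R ⊆ P₁


open MeasureTheory

abbrev Conn (S : Set HexV) (x y : HexV) : Prop := Relation.ReflTransGen (adjIn S) x y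

lemma hexAdj_symm {v w : HexV} (h : HexAdj v w) : HexAdj w v := by
  obtain ⟨h1, e, h2, h3⟩ := h
  exact ⟨h1.symm, e, h3, h2⟩

lemma adjIn_symm {S : Set HexV} {v w : HexV} (h : adjIn S v w) : adjIn S w v :=
  ⟨hexAdj_symm h.1, h.2.2, h.2.1⟩

lemma conn_symm {S : Set HexV} {x y : HexV} (h : Conn S x y) : Conn S y x := by
  induction h with
  | refl => exact .refl
  | tail _ h ih => exact .head (adjIn_symm h) ih

lemma conn_mono {S T : Set HexV} (hST : S ⊆ T) {x y : HexV} (h : Conn S x y) : Conn T x y := by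
  induction h with
  | refl => exact .refl
  | tail _ h ih => exact ih.tail ⟨h.1, hST h.2.1, hST h.2.2⟩

lemma conn_mem {S : Set HexV} {x y : HexV} (hx : x ∈ S) (h : Conn S x y) : y ∈ S := by
  induction h with
  | refl => exact hx
  | tail _ h ih => exact h.2.2

lemma conn_restrict {S T : Set HexV} {x : HexV} (hT : ∀ z, Conn S x z → z ∈ T) {y : HexV}
    (h : Conn S x y) : Conn T x y := by
  induction h with
  | refl => exact .refl
  | tail h1 h2 ih => exact ih.tail ⟨h2.1, hT _ h1, hT _ (h1.tail h2)⟩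

lemma hexAdj_bound {v w : HexV} (h : HexAdj v w) :
    |v.1 - w.1| ≤ 1 ∧ |v.2.1 - w.2.1| ≤ 1 := by
  obtain ⟨_, ⟨x, y, k⟩, h1, h2⟩ := h
  rcases h1 with rfl | rfl <;> rcases h2 with rfl | rfl <;> fin_cases k <;>
    simp [end1, end2]

lemma box_finite (n : ℕ) (i j : ℤ) : (box n i j).Finite := by
  refine Set.Finite.subset (((Finset.Icc (i - n) (i + n)) ×ˢ
    ((Finset.Icc (j - n) (j + n)) ×ˢ (Finset.univ : Finset Bool))).finite_toSet) ?_
  rintro ⟨x, y, t⟩ ⟨h1, h2⟩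
  simp only [abs_le] at h1 h2
  simp
  omega

lemma nbr_finite (x : HexV) : {w | HexAdj x w}.Finite := by
  refine (box_finite 1 x.1 x.2.1).subset ?_
  intro w hw
  have := hexAdj_bound hw
  simp only [box, Set.mem_ofPred_eq, abs_le] at *
  push_cast
  omega

/-- escaping component lemma -/
lemma exists_escape {S : Set HexV} {R : Set HexV} (hR : R.Finite) {u : HexV} (hu : u ∈ R)
    (hinf : (compOf S u).Infinite) :
    ∃ w, w ∈ S \ R ∧ (∃ x ∈ R ∩ S, HexAdj x w) ∧ Conn S u w ∧ (compOf (S \ R) w).Infinite := by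
  by_contra! hcon
  apply hinf
  set N : Set HexV := {w | w ∈ S \ R ∧ (∃ x ∈ R ∩ S, HexAdj x w) ∧ Conn S u w} with hN
  have hNf : N.Finite := by
    refine (hR.biUnion (fun x _ => nbr_finite x)).subset ?_
    rintro w ⟨_, ⟨x, hx, hxw⟩, _⟩
    simp only [Set.mem_iUnion]
    exact ⟨x, hx.1, hxw⟩
  have hsub : compOf S u ⊆ R ∪ ⋃ w ∈ N, compOf (S \ R) w := by
    intro y hy
    change Conn S u y at hy
    induction hy with
    | refl => exact Or.inl hu
    | @tail y z h1 h2 ih =>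
      by_cases hz : z ∈ R
      · exact Or.inl hz
      right
      simp only [Set.mem_iUnion]
      by_cases hy : y ∈ R
      · exact ⟨z, ⟨⟨h2.2.2, hz⟩, ⟨y, ⟨hy, h2.2.1⟩, h2.1⟩, h1.tail h2⟩, .refl⟩
      · rcases ih with ih | ih
        · exact absurd ih hy
        simp only [Set.mem_iUnion] at ih
        obtain ⟨w, hw, hwy⟩ := ih
        exact ⟨w, hw, Relation.ReflTransGen.tail hwy ⟨h2.1, ⟨h2.2.1, hy⟩, ⟨h2.2.2, hz⟩⟩⟩
  refine Set.Finite.subset (hR.union (hNf.biUnion ?_)) hsub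
  intro w hw
  have := hcon w hw.1 hw.2.1 hw.2.2
  simpa using this

/-- `D` is a trifurcation blob of `S` with branch vertices `w`. -/
structure IsTrif (S D : Set HexV) (w : Fin 3 → HexV) : Prop where
  sub : D ⊆ S
  conn : ∀ x ∈ D, ∀ y ∈ D, Conn D x y
  mem : ∀ i, w i ∈ S \ D
  adj : ∀ i, ∃ x ∈ D, HexAdj x (w i)
  inf : ∀ i, (compOf (S \ D) (w i)).Infinite
  sep : ∀ i j, i ≠ j → ¬ Conn (S \ D) (w i) (w j)

lemma trif_of_fill {S S' R : Set HexV} (hR : R.Finite) (h1 : S ⊆ S') (h2 : S' ⊆ S ∪ R)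
    (hD : ∀ x ∈ S' ∩ R, ∀ y ∈ S' ∩ R, Conn (S' ∩ R) x y) (u : Fin 3 → HexV)
    (huR : ∀ i, u i ∈ R) (hinf : ∀ i, (compOf S (u i)).Infinite)
    (hsep : ∀ i j, i ≠ j → ¬ Conn S (u i) (u j)) :
    ∃ w, IsTrif S' (S' ∩ R) w := by
  have hSR : S' \ (S' ∩ R) = S \ R := by
    ext x
    constructor
    · rintro ⟨a, b⟩
      have : x ∉ R := fun h => b ⟨a, h⟩
      exact ⟨(h2 a).resolve_right this, this⟩
    · rintro ⟨a, b⟩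
      exact ⟨h1 a, fun h => b h.2⟩
  choose w hw using fun i => exists_escape hR (huR i) (hinf i)
  refine ⟨w, Set.inter_subset_left, hD, ?_, ?_, ?_, ?_⟩
  · intro i; rw [hSR]; exact (hw i).1
  · intro i
    obtain ⟨x, hx, hxw⟩ := (hw i).2.1
    exact ⟨x, ⟨h1 hx.2, hx.1⟩, hxw⟩
  · intro i; rw [hSR]; exact (hw i).2.2.2
  · intro i j hij h
    rw [hSR] at h
    exact hsep i j hij (((hw i).2.2.1.trans (conn_mono Set.sdiff_subset h)).trans
      (conn_symm (hw j).2.2.1))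

/-- merging lemma -/
lemma merge_of_fill {S S' R : Set HexV} (h1 : S ⊆ S') (h2 : S' ⊆ S ∪ R)
    (hD : ∀ x ∈ S' ∩ R, ∀ y ∈ S' ∩ R, Conn (S' ∩ R) x y)
    (hall : ∀ v ∈ S, (compOf S v).Infinite → ∃ u ∈ R ∩ S, Conn S v u) :
    ∀ v ∈ S', ∀ v' ∈ S', (compOf S' v).Infinite → (compOf S' v').Infinite → Conn S' v v' := by
  have key : ∀ v ∈ S', (compOf S' v).Infinite → ∃ x ∈ S' ∩ R, Conn S' v x := by
    intro v hv hinf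
    by_cases hm : ∃ x ∈ R, Conn S' v x
    · obtain ⟨x, hx, hvx⟩ := hm
      exact ⟨x, ⟨conn_mem hv hvx, hx⟩, hvx⟩
    · push Not at hm
      have hS : ∀ z, Conn S' v z → z ∈ S := fun z hz =>
        (h2 (conn_mem hv hz)).resolve_right (fun h => hm z h hz)
      have : (compOf S v).Infinite := hinf.mono (fun y hy => conn_restrict hS hy)
      obtain ⟨u, hu, hvu⟩ := hall v (hS v .refl) this
      exact ⟨u, ⟨h1 hu.2, hu.1⟩, conn_mono h1 hvu⟩
  intro v hv v' hv' hi hi'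
  obtain ⟨x, hx, hvx⟩ := key v hv hi
  obtain ⟨y, hy, hvy⟩ := key v' hv' hi'
  exact (hvx.trans (conn_mono Set.inter_subset_left (hD x hx y hy))).trans (conn_symm hvy)

open MeasureTheory

open Classical in
lemma trif_leaf {ι : Type*} {S : Set HexV} {D : ι → Set HexV} {w : ι → Fin 3 → HexV}
    (J : Finset ι) (hT : ∀ j ∈ J, IsTrif S (D j) (w j))
    (hdis : ∀ i ∈ J, ∀ j ∈ J, i ≠ j → Disjoint (D i) (D j)) (n : ℕ) :
    ∀ j ∈ J, ∀ a b : Fin 3, a ≠ b →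
      (J.filter (fun m => ∃ x ∈ D m, Conn (S \ D j) (w j a) x ∨ Conn (S \ D j) (w j b) x)).card = n →
      ∃ j ∈ J, ∃ a b : Fin 3, a ≠ b ∧ ∀ m ∈ J, ∀ x ∈ D m,
        ¬ Conn (S \ D j) (w j a) x ∧ ¬ Conn (S \ D j) (w j b) x := by
  induction n using Nat.strong_induction_on with
  | _ n ih =>
  intro j hj a b hab hn
  by_cases h0 : ∀ m ∈ J, ∀ x ∈ D m,
        ¬ Conn (S \ D j) (w j a) x ∧ ¬ Conn (S \ D j) (w j b) x
  · exact ⟨j, hj, a, b, hab, h0⟩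
  have : ∃ l ∈ J, ∃ x ∈ D l, ∃ e, (e = a ∨ e = b) ∧ Conn (S \ D j) (w j e) x := by
    by_contra hcon
    apply h0
    intro m hm x hx
    exact ⟨fun h => hcon ⟨m, hm, x, hx, a, Or.inl rfl, h⟩,
      fun h => hcon ⟨m, hm, x, hx, b, Or.inr rfl, h⟩⟩
  obtain ⟨l, hl, x, hx, e, he, hc⟩ := this
  have hlj : l ≠ j := by
    rintro rfl
    exact (conn_mem ((hT l hj).mem e) hc).2 hx
  have hDl : D l ⊆ S \ D j := fun y hy => ⟨(hT l hl).sub hy,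
    fun h => Set.disjoint_left.1 (hdis l hl j hj hlj) hy h⟩
  have hDj : D j ⊆ S \ D l := fun y hy => ⟨(hT j hj).sub hy,
    fun h => Set.disjoint_left.1 (hdis l hl j hj hlj) h hy⟩
  have hDlc : ∀ y ∈ D l, Conn (S \ D j) (w j e) y := fun y hy =>
    hc.trans (conn_mono hDl ((hT l hl).conn x hx y hy))
  have huniq : ∀ c d, c ≠ d → (∃ y ∈ D j, Conn (S \ D l) (w l c) y) →
      (∃ y ∈ D j, Conn (S \ D l) (w l d) y) → False := by
    rintro c d hcd ⟨y, hy, h1⟩ ⟨z, hz, h2⟩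
    exact (hT l hl).sep c d hcd
      ((h1.trans (conn_mono hDj ((hT j hj).conn y hy z hz))).trans (conn_symm h2))
  have : ∃ c d : Fin 3, c ≠ d ∧ (¬ ∃ y ∈ D j, Conn (S \ D l) (w l c) y) ∧
      (¬ ∃ y ∈ D j, Conn (S \ D l) (w l d) y) := by
    by_cases g0 : ∃ y ∈ D j, Conn (S \ D l) (w l 0) y
    · exact ⟨1, 2, by decide, fun h => huniq 0 1 (by decide) g0 h,
        fun h => huniq 0 2 (by decide) g0 h⟩
    by_cases g1 : ∃ y ∈ D j, Conn (S \ D l) (w l 1) y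
    · exact ⟨0, 2, by decide, g0, fun h => huniq 1 2 (by decide) g1 h⟩
    · exact ⟨0, 1, by decide, g0, g1⟩
  obtain ⟨c, d, hcd, hc', hd'⟩ := this
  have hin : ∀ c, (¬ ∃ y ∈ D j, Conn (S \ D l) (w l c) y) → ∀ y, Conn (S \ D l) (w l c) y →
      Conn (S \ D j) (w j e) y := by
    intro c hc' y hy
    have h1 : ∀ z, Conn (S \ D l) (w l c) z → z ∈ S \ D j := fun z hz =>
      ⟨(conn_mem ((hT l hl).mem c) hz).1, fun h => hc' ⟨z, h, hz⟩⟩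
    obtain ⟨x', hx', hadj⟩ := (hT l hl).adj c
    exact ((hDlc x' hx').tail ⟨hadj, hDl hx', h1 _ .refl⟩).trans (conn_restrict h1 hy)
  refine ih _ ?_ l hl c d hcd rfl
  rw [← hn]
  apply Finset.card_lt_card
  rw [Finset.ssubset_iff_of_subset]
  · refine ⟨l, ?_, ?_⟩
    · rw [Finset.mem_filter]
      refine ⟨hl, x, hx, ?_⟩
      rcases he with rfl | rfl
      · exact Or.inl hc
      · exact Or.inr hc
    · rw [Finset.mem_filter]
      rintro ⟨_, y, hy, h | h⟩
      · exact (conn_mem ((hT l hl).mem c) h).2 hy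
      · exact (conn_mem ((hT l hl).mem d) h).2 hy
  · intro m hm
    rw [Finset.mem_filter] at hm ⊢
    obtain ⟨hm, y, hy, h⟩ := hm
    refine ⟨hm, y, hy, ?_⟩
    have : Conn (S \ D j) (w j e) y := by
      rcases h with h | h
      · exact hin c hc' y h
      · exact hin d hd' y h
    rcases he with rfl | rfl
    · exact Or.inl this
    · exact Or.inr this

open Classical in
lemma trif_reps {ι : Type*} {S : Set HexV} {D : ι → Set HexV} {w : ι → Fin 3 → HexV} (n : ℕ) :
    ∀ (J : Finset ι), J.card = n → (∀ j ∈ J, IsTrif S (D j) (w j)) →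
    (∀ i ∈ J, ∀ j ∈ J, i ≠ j → Disjoint (D i) (D j)) →
    ∃ P : Finset HexV, J.card ≤ P.card ∧
      (∀ r ∈ P, r ∈ S \ (⋃ j ∈ J, D j) ∧ (∃ x ∈ ⋃ j ∈ J, D j, HexAdj x r) ∧
        (compOf (S \ ⋃ j ∈ J, D j) r).Infinite) ∧
      (∀ r ∈ P, ∀ r' ∈ P, r ≠ r' → ¬ Conn (S \ ⋃ j ∈ J, D j) r r') := by
  induction n with
  | zero =>
    intro J hJ _ _
    exact ⟨∅, by simp [hJ], by simp, by simp⟩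
  | succ n ih =>
  intro J hJ hT hdis
  obtain ⟨j0, hj0⟩ : J.Nonempty := Finset.card_pos.1 (by omega)
  obtain ⟨j, hj, a, b, hab, hleaf⟩ := trif_leaf J hT hdis _ j0 hj0 0 1 (by decide) rfl
  have hcard : (J.erase j).card = n := by rw [Finset.card_erase_of_mem hj]; omega
  obtain ⟨P, hP1, hP2, hP3⟩ := ih (J.erase j) hcard (fun i hi => hT i (Finset.mem_of_mem_erase hi))
    (fun i hi k hk => hdis i (Finset.mem_of_mem_erase hi) k (Finset.mem_of_mem_erase hk))
  set U := ⋃ i ∈ J.erase j, D i with hU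
  have hUJ : (⋃ i ∈ J, D i) = U ∪ D j := by
    conv_lhs => rw [← Finset.insert_erase hj]
    rw [Finset.set_biUnion_insert, Set.union_comm]
  rw [hUJ]
  have hDjU : D j ⊆ S \ U := by
    intro x hx
    refine ⟨(hT j hj).sub hx, ?_⟩
    simp only [hU, Set.mem_iUnion]
    rintro ⟨i, hi, hxi⟩
    exact Set.disjoint_left.1 (hdis i (Finset.mem_of_mem_erase hi) j hj (Finset.ne_of_mem_erase hi)) hxi hx
  obtain ⟨x0, hx0, -⟩ := (hT j hj).adj a
  have hcj : ∀ x ∈ D j, ∀ y ∈ D j, Conn (S \ U) x y := fun x hx y hy =>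
    conn_mono hDjU ((hT j hj).conn x hx y hy)
  have hbr : ∀ e, (e = a ∨ e = b) → ∀ z, Conn (S \ D j) (w j e) z → z ∈ S \ (U ∪ D j) := by
    intro e he z hz
    refine ⟨(conn_mem ((hT j hj).mem e) hz).1, ?_⟩
    rw [← hUJ]
    simp only [Set.mem_iUnion]
    rintro ⟨i, hi, hzi⟩
    have := hleaf i hi z hzi
    rcases he with rfl | rfl
    · exact this.1 hz
    · exact this.2 hz
  have hsub : S \ (U ∪ D j) ⊆ S \ U := fun x hx => ⟨hx.1, fun h => hx.2 (Or.inl h)⟩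
  have hsub2 : S \ (U ∪ D j) ⊆ S \ D j := fun x hx => ⟨hx.1, fun h => hx.2 (Or.inr h)⟩
  have hwx0 : ∀ e, (e = a ∨ e = b) → Conn (S \ U) (w j e) x0 := by
    intro e he
    obtain ⟨x, hx, hadj⟩ := (hT j hj).adj e
    exact Relation.ReflTransGen.head ⟨hexAdj_symm hadj, hsub (hbr e he _ .refl), hDjU hx⟩
      (hcj x hx x0 hx0)
  set P' := P.filter (fun r => ¬ Conn (S \ U) r x0) with hP'
  have hP'c : P.card ≤ P'.card + 1 := by
    have h1 : P'.card + (P.filter (fun r => ¬ ¬ Conn (S \ U) r x0)).card = P.card := by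
      convert Finset.card_filter_add_card_filter_not (s := P) (fun r => ¬ Conn (S \ U) r x0)
    have h2 : (P.filter (fun r => ¬ ¬ Conn (S \ U) r x0)).card ≤ 1 := by
      rw [Finset.card_le_one]
      intro r hr r' hr'
      simp only [not_not, Finset.mem_filter] at hr hr'
      by_contra hne
      exact hP3 r hr.1 r' hr'.1 hne (hr.2.trans (conn_symm hr'.2))
    omega
  have hwne : w j a ≠ w j b := fun h => (hT j hj).sep a b hab (h ▸ .refl)
  have hwa : w j a ∉ P' := fun h => (Finset.mem_filter.1 h).2 (hwx0 a (Or.inl rfl))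
  have hwb : w j b ∉ P' := fun h => (Finset.mem_filter.1 h).2 (hwx0 b (Or.inr rfl))
  refine ⟨insert (w j a) (insert (w j b) P'), ?_, ?_, ?_⟩
  · rw [Finset.card_insert_of_notMem (by simp [hwne, hwa]), Finset.card_insert_of_notMem hwb]
    omega
  · have hw : ∀ e, (e = a ∨ e = b) → w j e ∈ S \ (U ∪ D j) ∧ (∃ x ∈ U ∪ D j, HexAdj x (w j e)) ∧
        (compOf (S \ (U ∪ D j)) (w j e)).Infinite := by
      intro e he
      refine ⟨hbr e he _ .refl, ?_, ?_⟩
      · obtain ⟨x, hx, hadj⟩ := (hT j hj).adj e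
        exact ⟨x, Or.inr hx, hadj⟩
      · exact ((hT j hj).inf e).mono (fun y hy => conn_restrict (hbr e he) hy)
    intro r hr
    rw [Finset.mem_insert, Finset.mem_insert] at hr
    rcases hr with rfl | rfl | hr
    · exact hw a (Or.inl rfl)
    · exact hw b (Or.inr rfl)
    · rw [hP', Finset.mem_filter] at hr
      obtain ⟨g1, ⟨x, hx, hxr⟩, g3⟩ := hP2 r hr.1
      have hz : ∀ z, Conn (S \ U) r z → z ∈ S \ (U ∪ D j) := by
        intro z hz
        have := conn_mem g1 hz
        refine ⟨this.1, ?_⟩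
        rintro (h | h)
        · exact this.2 h
        · exact hr.2 (hz.trans (hcj z h x0 hx0))
      exact ⟨hz r .refl, ⟨x, Or.inl hx, hxr⟩, g3.mono (fun y hy => conn_restrict hz hy)⟩
  · have k1 : ∀ e, (e = a ∨ e = b) → ∀ r ∈ P', ¬ Conn (S \ (U ∪ D j)) r (w j e) := by
      intro e he r hr h
      rw [hP', Finset.mem_filter] at hr
      exact hr.2 ((conn_mono hsub h).trans (hwx0 e he))
    have k2 : ¬ Conn (S \ (U ∪ D j)) (w j a) (w j b) := fun h =>
      (hT j hj).sep a b hab (conn_mono hsub2 h)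
    intro r hr r' hr' hne h
    rw [Finset.mem_insert, Finset.mem_insert] at hr hr'
    rcases hr with rfl | rfl | hr <;> rcases hr' with rfl | rfl | hr'
    · exact hne rfl
    · exact k2 h
    · exact k1 a (Or.inl rfl) _ hr' (conn_symm h)
    · exact k2 (conn_symm h)
    · exact hne rfl
    · exact k1 b (Or.inr rfl) _ hr' (conn_symm h)
    · exact k1 a (Or.inl rfl) _ hr h
    · exact k1 b (Or.inr rfl) _ hr h
    · exact hP3 r (Finset.mem_filter.1 hr).1 r' (Finset.mem_filter.1 hr').1 hne (conn_mono hsub h)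

open MeasureTheory

/-- lattice automorphisms -/
def IsAut (φ : HexV ≃ HexV) : Prop := ∀ x y, HexAdj x y ↔ HexAdj (φ x) (φ y)

lemma IsAut.symm {φ : HexV ≃ HexV} (h : IsAut φ) : IsAut φ.symm := by
  intro x y
  rw [h (φ.symm x) (φ.symm y), φ.apply_symm_apply, φ.apply_symm_apply]

lemma conn_map {φ : HexV ≃ HexV} (h : IsAut φ) {S : Set HexV} {x y : HexV}
    (hc : Conn (φ ⁻¹' S) x y) : Conn S (φ x) (φ y) := by
  induction hc with
  | refl => exact .refl
  | tail _ h2 ih => exact ih.tail ⟨(h _ _).1 h2.1, h2.2.1, h2.2.2⟩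

lemma conn_map_iff {φ : HexV ≃ HexV} (h : IsAut φ) {S : Set HexV} {x y : HexV} :
    Conn (φ ⁻¹' S) x y ↔ Conn S (φ x) (φ y) := by
  refine ⟨conn_map h, fun hc => ?_⟩
  have : S = φ.symm ⁻¹' (φ ⁻¹' S) := by ext; simp
  rw [this] at hc
  simpa using conn_map h.symm hc

lemma compOf_preimage {φ : HexV ≃ HexV} (h : IsAut φ) {S : Set HexV} {x : HexV} :
    compOf (φ ⁻¹' S) x = φ ⁻¹' (compOf S (φ x)) := by
  ext y
  exact conn_map_iff h

lemma compOf_inf_iff {φ : HexV ≃ HexV} (h : IsAut φ) {S : Set HexV} {x : HexV} :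
    (compOf (φ ⁻¹' S) x).Infinite ↔ (compOf S (φ x)).Infinite := by
  rw [compOf_preimage h]
  constructor
  · intro hi hf
    exact hi (hf.preimage φ.injective.injOn)
  · intro hi
    exact hi.preimage (by simp)

lemma isTrif_map {φ : HexV ≃ HexV} (h : IsAut φ) {S D : Set HexV} {w : Fin 3 → HexV}
    (ht : IsTrif (φ ⁻¹' S) D w) : IsTrif S (φ '' D) (fun i => φ (w i)) := by
  have e : φ ⁻¹' S \ D = φ ⁻¹' (S \ φ '' D) := by ext; simp
  constructor
  · rintro _ ⟨x, hx, rfl⟩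
    exact ht.sub hx
  · rintro _ ⟨x, hx, rfl⟩ _ ⟨y, hy, rfl⟩
    rw [← conn_map_iff h]
    simpa using ht.conn x hx y hy
  · intro i
    have := ht.mem i
    rw [e] at this
    exact this
  · intro i
    obtain ⟨x, hx, hxa⟩ := ht.adj i
    exact ⟨φ x, ⟨x, hx, rfl⟩, (h _ _).1 hxa⟩
  · intro i
    have := ht.inf i
    rw [e, compOf_inf_iff h] at this
    exact this
  · intro i j hij
    have := ht.sep i j hij
    rw [e, conn_map_iff h] at this
    exact this

/-- translation of vertices -/
def shiftV (g : ℤ × ℤ) : HexV ≃ HexV where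
  toFun v := (v.1 + g.1, v.2.1 + g.2, v.2.2)
  invFun v := (v.1 - g.1, v.2.1 - g.2, v.2.2)
  left_inv v := by simp
  right_inv v := by simp

lemma shift_end1 (g : ℤ × ℤ) (e : HexE) : end1 (shiftE g e) = shiftV g (end1 e) := rfl

lemma shift_end2 (g : ℤ × ℤ) (e : HexE) : end2 (shiftE g e) = shiftV g (end2 e) := by
  obtain ⟨x, y, k⟩ := e
  fin_cases k <;> simp [end2, shiftE, shiftV] <;> ring

lemma shiftV_adj (g : ℤ × ℤ) {x y : HexV} (h : HexAdj x y) : HexAdj (shiftV g x) (shiftV g y) := by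
  obtain ⟨h1, e, h2, h3⟩ := h
  refine ⟨fun h => h1 ((shiftV g).injective h), shiftE g e, ?_, ?_⟩
  · rw [shift_end1, shift_end2]
    simpa using h2
  · rw [shift_end1, shift_end2]
    simpa using h3

lemma shiftV_aut (g : ℤ × ℤ) : IsAut (shiftV g) := by
  intro x y
  refine ⟨shiftV_adj g, fun h => ?_⟩
  have := shiftV_adj (-g) h
  simpa [shiftV] using this

lemma shift_edgesAt (g : ℤ × ℤ) (v : HexV) (i : Fin 3) :
    edgesAt (shiftV g v) i = shiftE g (edgesAt v i) := by
  obtain ⟨x, y, t⟩ := v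
  cases t <;> fin_cases i <;> simp [edgesAt, shiftE, shiftV] <;> ring

lemma localConf_shift (g : ℤ × ℤ) (ω : Config) (v : HexV) :
    localConf (shiftConfig g ω) v = localConf ω (shiftV g v) := by
  funext i
  simp [localConf, shiftConfig, shift_edgesAt]

lemma confSet_shift (g : ℤ × ℤ) (ω : Config) (τ : Fin 3 → Bool) :
    confSet (shiftConfig g ω) τ = shiftV g ⁻¹' (confSet ω τ) := by
  ext v
  change _ = _ ↔ _ = _
  rw [localConf_shift]

lemma measurable_shiftConfig (g : ℤ × ℤ) : Measurable (shiftConfig g) := by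
  rw [measurable_pi_iff]
  intro e
  exact measurable_pi_apply _

/-! ### measurability -/

lemma meas_conn {S : Config → Set HexV} (hS : ∀ v, Measurable fun ω => v ∈ S ω) (x y : HexV) :
    Measurable fun ω => Conn (S ω) x y := by
  let p : ℕ → Config → HexV → Prop := fun n => Nat.rec (fun _ y => x = y)
    (fun _ q ω y => ∃ z, q ω z ∧ adjIn (S ω) z y) n
  have hp : ∀ n y, Measurable fun ω => p n ω y := by
    intro n
    induction n with
    | zero => intro y; exact measurable_const
    | succ n ih =>
      intro y
      refine Measurable.exists fun z => (ih z).and ?_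
      exact (measurable_const.and ((hS z).and (hS y)))
  have : (fun ω => Conn (S ω) x y) = fun ω => ∃ n, p n ω y := by
    funext ω
    apply propext
    constructor
    · intro h
      induction h with
      | refl => exact ⟨0, rfl⟩
      | tail _ h ih =>
        obtain ⟨n, hn⟩ := ih
        exact ⟨n + 1, _, hn, h⟩
    · rintro ⟨n, hn⟩
      induction n generalizing y with
      | zero => change x = y at hn; rw [hn]
      | succ n ih =>
        obtain ⟨z, hz, h⟩ := hn
        exact (ih z hz).tail h
  rw [this]
  exact Measurable.exists fun n => hp n y

lemma mem_box_norm (v : HexV) : v ∈ box (v.1.natAbs + v.2.1.natAbs) 0 0 := by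
  change _ ≤ _ ∧ _ ≤ _
  rw [Int.abs_eq_natAbs, Int.abs_eq_natAbs]
  omega

lemma box_mono {m n : ℕ} (h : m ≤ n) (i j : ℤ) : box m i j ⊆ box n i j := by
  intro v hv
  have : (m : ℤ) ≤ n := by exact_mod_cast h
  exact ⟨hv.1.trans this, hv.2.trans this⟩

lemma infinite_iff_box (C : Set HexV) : C.Infinite ↔ ∀ n : ℕ, ∃ y, y ∈ C ∧ y ∉ box n 0 0 := by
  constructor
  · intro h n
    by_contra! hcon
    exact h ((box_finite n 0 0).subset hcon)
  · intro h hf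
    obtain ⟨n, hn⟩ : ∃ n : ℕ, ∀ y ∈ C, y.1.natAbs + y.2.1.natAbs ≤ n :=
      (hf.image (fun y : HexV => y.1.natAbs + y.2.1.natAbs)).bddAbove.imp
        (fun n hn y hy => hn ⟨y, hy, rfl⟩)
    obtain ⟨y, hy, hyn⟩ := h n
    exact hyn (box_mono (hn y hy) 0 0 (mem_box_norm y))

lemma meas_inf {S : Config → Set HexV} (hS : ∀ v, Measurable fun ω => v ∈ S ω) (x : HexV) :
    Measurable fun ω => (compOf (S ω) x).Infinite := by
  simp only [infinite_iff_box]
  refine Measurable.forall fun n => Measurable.exists fun y => ?_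
  exact (meas_conn hS x y).and measurable_const

lemma meas_confSet (τ : Fin 3 → Bool) (v : HexV) : Measurable fun ω => v ∈ confSet ω τ := by
  have : (fun ω => v ∈ confSet ω τ) = fun ω => ∀ i, ω (edgesAt v i) = τ i := by
    funext ω
    apply propext
    change _ = _ ↔ _
    rw [funext_iff]; rfl
  rw [this]
  refine Measurable.forall fun i => ?_
  have h : Measurable fun ω : Config => ω (edgesAt v i) := measurable_pi_apply _
  exact measurableSet_setOfPred.1 (h (measurableSet_singleton (τ i)))

lemma meas_isTrif (τ : Fin 3 → Bool) (D : Set HexV) (w : Fin 3 → HexV) :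
    Measurable fun ω => IsTrif (confSet ω τ) D w := by
  have hD : ∀ v, Measurable fun ω => v ∈ confSet ω τ \ D := fun v =>
    (meas_confSet τ v).and measurable_const
  have : (fun ω => IsTrif (confSet ω τ) D w) = fun ω =>
      (∀ v, v ∈ D → v ∈ confSet ω τ) ∧ (∀ x ∈ D, ∀ y ∈ D, Conn D x y) ∧
      (∀ i, w i ∈ confSet ω τ \ D) ∧ (∀ i, ∃ x ∈ D, HexAdj x (w i)) ∧
      (∀ i, (compOf (confSet ω τ \ D) (w i)).Infinite) ∧
      (∀ i j, i ≠ j → ¬ Conn (confSet ω τ \ D) (w i) (w j)) := by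
    funext ω
    apply propext
    exact ⟨fun ⟨a, b, c, d, e, f⟩ => ⟨a, b, c, d, e, f⟩, fun ⟨a, b, c, d, e, f⟩ => ⟨a, b, c, d, e, f⟩⟩
  rw [this]
  refine Measurable.and ?_ (measurable_const.and (Measurable.and ?_ (measurable_const.and
    (Measurable.and ?_ ?_))))
  · exact Measurable.forall fun v => measurable_const.imp (meas_confSet τ v)
  · exact Measurable.forall fun i => hD _
  · exact Measurable.forall fun i => meas_inf hD _
  · exact Measurable.forall fun i => Measurable.forall fun j => measurable_const.imp (meas_conn hD _ _).not

/-- trifurcation event -/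
def Trif (τ : Fin 3 → Bool) (R : Finset HexV) : Set Config :=
  {ω | ∃ D : Finset HexV, D ⊆ R ∧ ∃ w, IsTrif (confSet ω τ) D w}

lemma meas_Trif (τ : Fin 3 → Bool) (R : Finset HexV) : MeasurableSet (Trif τ R) := by
  apply measurableSet_setOfPred.2
  exact Measurable.exists fun D => measurable_const.and (Measurable.exists fun w => meas_isTrif τ _ w)

open MeasureTheory

noncomputable def frame (N : ℕ) : Finset HexV :=
  (({-(N : ℤ) , (N : ℤ)} : Finset ℤ) ×ˢ ((Finset.Icc (-(N : ℤ)) N) ×ˢ (Finset.univ : Finset Bool))) ∪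
  ((Finset.Icc (-(N : ℤ)) N) ×ˢ (({-(N : ℤ) , (N : ℤ)} : Finset ℤ) ×ˢ (Finset.univ : Finset Bool)))

lemma frame_card (N : ℕ) : (frame N).card ≤ 8 * (2 * N + 1) := by
  have h2 : ({-(N : ℤ) , (N : ℤ)} : Finset ℤ).card ≤ 2 := Finset.card_le_two
  have h3 : (Finset.Icc (-(N : ℤ)) N).card = 2 * N + 1 := by
    rw [Int.card_Icc]; omega
  refine (Finset.card_union_le _ _).trans ?_
  simp only [Finset.card_product, h3, Finset.card_univ, Fintype.card_bool]
  nlinarith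

lemma hits_frame {S : Set HexV} {r : HexV} {N : ℕ} (hr : r ∈ box N 0 0)
    (hi : (compOf S r).Infinite) : ∃ y ∈ frame (N + 1), Conn S r y := by
  obtain ⟨z, hz, hzN⟩ := (infinite_iff_box _).1 hi N
  change Conn S r z at hz
  clear hi
  by_contra! hcon
  have : ∀ y, Conn S r y → y ∈ box N 0 0 := by
    intro y hy
    induction hy with
    | refl => exact hr
    | @tail y y' h1 h2 ih =>
      have hb := hexAdj_bound h2.1
      have hn : ¬ y' ∈ frame (N + 1) := fun h => hcon y' h (h1.tail h2)
      have ih : _ ≤ _ ∧ _ ≤ _ := ih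
      change _ ≤ _ ∧ _ ≤ _
      simp only [frame, Finset.mem_union, Finset.mem_product, Finset.mem_insert,
        Finset.mem_singleton, Finset.mem_Icc, Finset.mem_univ, and_true] at hn
      simp only [abs_le] at *
      push_cast at hn
      omega
  exact hzN (this z hz)

lemma trif_count {ι : Type*} {S : Set HexV} {D : ι → Set HexV} {w : ι → Fin 3 → HexV}
    (J : Finset ι) (hT : ∀ j ∈ J, IsTrif S (D j) (w j))
    (hdis : ∀ i ∈ J, ∀ j ∈ J, i ≠ j → Disjoint (D i) (D j)) (N : ℕ)
    (hN : ∀ j ∈ J, D j ⊆ box N 0 0) : J.card ≤ 8 * (2 * (N + 2) + 1) := by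
  obtain ⟨P, h1, h2, h3⟩ := trif_reps _ J rfl hT hdis
  refine h1.trans (le_trans ?_ (frame_card (N + 2)))
  have : ∀ r ∈ P, ∃ y ∈ frame (N + 2), Conn (S \ ⋃ j ∈ J, D j) r y := by
    intro r hr
    obtain ⟨_, ⟨x, hx, hxr⟩, hi⟩ := h2 r hr
    refine hits_frame ?_ hi
    simp only [Set.mem_iUnion] at hx
    obtain ⟨j, hj, hx⟩ := hx
    have hx : _ ≤ _ ∧ _ ≤ _ := hN j hj hx
    have hb := hexAdj_bound hxr
    change _ ≤ _ ∧ _ ≤ _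
    simp only [abs_le] at *
    push_cast
    omega
  choose! f hf1 hf2 using this
  refine Finset.card_le_card_of_injOn f (fun r hr => hf1 r hr) ?_
  intro r hr r' hr' heq
  by_contra hne
  refine h3 r hr r' hr' hne ((hf2 r hr).trans ?_)
  have := conn_symm (hf2 r' hr')
  rwa [← heq] at this

lemma trif_pointwise (τ : Fin 3 → Bool) (R : Finset HexV) (M : ℕ) (hM : (R : Set HexV) ⊆ box M 0 0)
    (n : ℕ) (ω : Config) (J : Finset (ℕ × ℕ)) (hJ : J ⊆ Finset.range n ×ˢ Finset.range n)
    (h : ∀ p ∈ J, shiftConfig ((2 * M + 1) * p.1, (2 * M + 1) * p.2) ω ∈ Trif τ R) :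
    J.card ≤ 8 * (2 * (M + (2 * M + 1) * n + 2) + 1) := by
  have : ∀ p : ℕ × ℕ, p ∈ J → ∃ D : Finset HexV, D ⊆ R ∧ ∃ w,
      IsTrif (confSet ω τ) (shiftV ((2 * M + 1) * p.1, (2 * M + 1) * p.2) '' D) w := by
    intro p hp
    obtain ⟨D, hD, w, hw⟩ := h p hp
    rw [confSet_shift] at hw
    exact ⟨D, hD, _, isTrif_map (shiftV_aut _) hw⟩
  choose! D hD w hw using this
  refine trif_count J hw ?_ _ ?_
  · rintro ⟨i, j⟩ hp ⟨i', j'⟩ hp' hne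
    rw [Set.disjoint_left]
    rintro _ ⟨x, hx, rfl⟩ ⟨x', hx', heq⟩
    have hx := hM (hD _ hp hx)
    have hx' := hM (hD _ hp' hx')
    obtain ⟨a, b, t⟩ := x
    obtain ⟨a', b', t'⟩ := x'
    have hx : _ ≤ _ ∧ _ ≤ _ := hx
    have hx' : _ ≤ _ ∧ _ ≤ _ := hx'
    simp only [shiftV, Equiv.coe_fn_mk, Prod.mk.injEq] at heq
    simp only [abs_le, sub_zero] at hx hx'
    have key : ∀ (p q : ℕ) (u v : ℤ), -(M : ℤ) ≤ u → u ≤ M → -(M : ℤ) ≤ v → v ≤ M →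
        u + (2 * M + 1) * p = v + (2 * M + 1) * q → p = q := by
      intro p q u v h1 h2 h3 h4 h5
      have h6 : (2 * (M : ℤ) + 1) * (p - q) = v - u := by linarith
      by_contra hpq
      rcases Nat.lt_or_gt_of_ne hpq with h | h
      · have : (p : ℤ) - q ≤ -1 := by omega
        nlinarith
      · have : (1 : ℤ) ≤ p - q := by omega
        nlinarith
    apply hne
    rw [key i i' a a' hx.1.1 hx.1.2 hx'.1.1 hx'.1.2 heq.1.symm, key j j' b b' hx.2.1 hx.2.2 hx'.2.1 hx'.2.2 heq.2.1.symm]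
  · rintro ⟨i, j⟩ hp _ ⟨x, hx, rfl⟩
    have hx : _ ≤ _ ∧ _ ≤ _ := hM (hD _ hp hx)
    have hr := hJ hp
    simp only [Finset.mem_product, Finset.mem_range] at hr
    obtain ⟨a, b, t⟩ := x
    change _ ≤ _ ∧ _ ≤ _
    simp only [shiftV, Equiv.coe_fn_mk, abs_le, sub_zero] at hx ⊢
    push_cast
    have h1 : (2 * (M : ℤ) + 1) * i ≤ (2 * M + 1) * n := by
      apply mul_le_mul_of_nonneg_left _ (by positivity); omega
    have h2 : (2 * (M : ℤ) + 1) * j ≤ (2 * M + 1) * n := by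
      apply mul_le_mul_of_nonneg_left _ (by positivity); omega
    have h3 : 0 ≤ (2 * (M : ℤ) + 1) * i := by positivity
    have h4 : 0 ≤ (2 * (M : ℤ) + 1) * j := by positivity
    refine ⟨⟨?_, ?_⟩, ?_, ?_⟩ <;> linarith [hx.1.1, hx.1.2, hx.2.1, hx.2.2]

open Classical in
lemma trif_null {μ : Measure Config} [IsProbabilityMeasure μ] (hTI : TransInvariant μ)
    (τ : Fin 3 → Bool) (R : Finset HexV) : μ (Trif τ R) = 0 := by
  obtain ⟨M, hM⟩ : ∃ M : ℕ, (R : Set HexV) ⊆ box M 0 0 := by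
    refine ⟨∑ v ∈ R, (v.1.natAbs + v.2.1.natAbs), fun v hv => ?_⟩
    exact box_mono (Finset.single_le_sum (f := fun v : HexV => v.1.natAbs + v.2.1.natAbs)
      (fun _ _ => Nat.zero_le _) hv) 0 0 (mem_box_norm v)
  set T := Trif τ R with hT
  have hTm : MeasurableSet T := meas_Trif τ R
  let g : ℕ × ℕ → ℤ × ℤ := fun p => ((2 * M + 1) * p.1, (2 * M + 1) * p.2)
  have hinv : ∀ p, μ (shiftConfig (g p) ⁻¹' T) = μ T := by
    intro p
    rw [← Measure.map_apply (measurable_shiftConfig _) hTm, hTI]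
  have key : ∀ n : ℕ, (n : ENNReal) * n * μ T ≤ (8 * (2 * (M + (2 * M + 1) * n + 2) + 1) : ℕ) := by
    intro n
    calc (n : ENNReal) * n * μ T = ∑ p ∈ Finset.range n ×ˢ Finset.range n, μ (shiftConfig (g p) ⁻¹' T) := by
          simp [hinv]
      _ = ∑ p ∈ Finset.range n ×ˢ Finset.range n, ∫⁻ ω, (shiftConfig (g p) ⁻¹' T).indicator 1 ω ∂μ := by
          refine Finset.sum_congr rfl fun p _ => ?_
          rw [lintegral_indicator_one (measurable_shiftConfig _ hTm)]
      _ = ∫⁻ ω, ∑ p ∈ Finset.range n ×ˢ Finset.range n, (shiftConfig (g p) ⁻¹' T).indicator 1 ω ∂μ := by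
          rw [lintegral_finsetSum]
          intro p _
          exact measurable_one.indicator (measurable_shiftConfig _ hTm)
      _ ≤ ∫⁻ ω, (8 * (2 * (M + (2 * M + 1) * n + 2) + 1) : ℕ) ∂μ := by
          refine lintegral_mono fun ω => ?_
          have h1 := trif_pointwise τ R M hM n ω
            ((Finset.range n ×ˢ Finset.range n).filter fun p => shiftConfig (g p) ω ∈ T)
            (Finset.filter_subset _ _) (fun p hp => (Finset.mem_filter.1 hp).2)
          refine le_trans (le_of_eq ?_) (Nat.cast_le.2 h1)
          rw [Finset.card_filter]
          push_cast
          refine Finset.sum_congr rfl fun p _ => ?_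
          simp [Set.indicator_apply]
      _ = _ := by simp
  set t := (μ T).toReal with ht
  have ht' : μ T = ENNReal.ofReal t := (ENNReal.ofReal_toReal (measure_ne_top _ _)).symm
  have ht0 : 0 ≤ t := ENNReal.toReal_nonneg
  have key2 : ∀ n : ℕ, (n : ℝ) * n * t ≤ 8 * (2 * (M + (2 * M + 1) * n + 2) + 1) := by
    intro n
    have := ENNReal.toReal_mono (ENNReal.natCast_ne_top _) (key n)
    rw [ENNReal.toReal_mul, ENNReal.toReal_mul, ENNReal.toReal_natCast, ENNReal.toReal_natCast] at this
    exact_mod_cast this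
  have : t = 0 := by
    by_contra hne
    have htp : 0 < t := lt_of_le_of_ne ht0 (Ne.symm hne)
    obtain ⟨n, hn⟩ := exists_nat_gt ((8 * (2 * (M + (2 * M + 1) + 2) + 1)) / t)
    rw [div_lt_iff₀ htp] at hn
    have hn1 : (1 : ℝ) ≤ n := by
      rcases Nat.eq_zero_or_pos n with h | h
      · subst h
        simp at hn
        have : (0:ℝ) ≤ M := Nat.cast_nonneg _
        linarith
      · exact_mod_cast h
    have h2 := key2 n
    have hM0 : (0:ℝ) ≤ M := Nat.cast_nonneg _
    nlinarith [mul_lt_mul_of_pos_left hn (by linarith : (0:ℝ) < n)]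
  rw [ht', this]; simp

open MeasureTheory

lemma end_edgesAt (v : HexV) (i : Fin 3) : end1 (edgesAt v i) = v ∨ end2 (edgesAt v i) = v := by
  obtain ⟨x, y, t⟩ := v
  cases t <;> fin_cases i <;> simp [edgesAt, end1, end2]

lemma edgesAt_of_end (e : HexE) (v : HexV) (h : end1 e = v ∨ end2 e = v) : ∃ i, edgesAt v i = e := by
  obtain ⟨x, y, k⟩ := e
  refine ⟨k, ?_⟩
  rcases h with rfl | rfl
  · simp [edgesAt, end1]
  · fin_cases k <;> simp [edgesAt, end2]

lemma mem_verts {F : Finset HexE} {v : HexV} : v ∈ verts F ↔ ∃ e ∈ F, end1 e = v ∨ end2 e = v := by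
  simp only [verts, Finset.mem_biUnion, endsFinset, Finset.mem_insert, Finset.mem_singleton]
  constructor
  · rintro ⟨e, he, h | h⟩
    · exact ⟨e, he, Or.inl h.symm⟩
    · exact ⟨e, he, Or.inr h.symm⟩
  · rintro ⟨e, he, h | h⟩
    · exact ⟨e, he, Or.inl h.symm⟩
    · exact ⟨e, he, Or.inr h.symm⟩

lemma edgesAt_mem_nbhd {F : Finset HexE} {v : HexV} (hv : v ∈ verts F) (i : Fin 3) :
    edgesAt v i ∈ edgeNbhd F := by
  obtain ⟨e, he, h⟩ := mem_verts.1 hv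
  refine ⟨e, he, ?_⟩
  rcases end_edgesAt v i with h' | h' <;> rcases h with h | h <;> simp [h, h']

lemma edgesAt_notMem {F : Finset HexE} {v : HexV} (hv : v ∉ verts F) (i : Fin 3) :
    edgesAt v i ∉ F := fun h => hv (mem_verts.2 ⟨_, h, end_edgesAt v i⟩)

lemma edgeNbhd_eq (F : Finset HexE) :
    edgeNbhd F = ↑((verts F).biUnion fun v => Finset.univ.image (edgesAt v)) := by
  ext e'
  simp only [Finset.coe_biUnion, Finset.coe_image, Set.mem_iUnion, Set.mem_image, Finset.coe_univ,
    Set.mem_univ, true_and]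
  constructor
  · rintro ⟨e, he, h⟩
    rcases h with h | h | h | h
    · exact ⟨end1 e, mem_verts.2 ⟨e, he, Or.inl rfl⟩, edgesAt_of_end e' _ (Or.inl h.symm)⟩
    · exact ⟨end1 e, mem_verts.2 ⟨e, he, Or.inl rfl⟩, edgesAt_of_end e' _ (Or.inr h.symm)⟩
    · exact ⟨end2 e, mem_verts.2 ⟨e, he, Or.inr rfl⟩, edgesAt_of_end e' _ (Or.inl h.symm)⟩
    · exact ⟨end2 e, mem_verts.2 ⟨e, he, Or.inr rfl⟩, edgesAt_of_end e' _ (Or.inr h.symm)⟩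
  · rintro ⟨v, hv, i, rfl⟩
    exact edgesAt_mem_nbhd hv i

/-- `F` together with its neighbourhood -/
def HN (F : Finset HexE) : Set HexE := ↑F ∪ edgeNbhd F

lemma HN_finite (F : Finset HexE) : (HN F).Finite := by
  rw [HN, edgeNbhd_eq]
  exact (Finset.finite_toSet _).union (Finset.finite_toSet _)

lemma HN_mono {F F' : Finset HexE} (h : F ⊆ F') : HN F ⊆ HN F' := by
  rintro e (he | ⟨e', he', hh⟩)
  · exact Or.inl (h he)
  · exact Or.inr ⟨e', h he', hh⟩

lemma HN_union (F F' : Finset HexE) : HN (F ∪ F') = HN F ∪ HN F' := by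
  apply Set.Subset.antisymm
  · rintro e (he | ⟨e', he', hh⟩)
    · rcases Finset.mem_union.1 he with h | h
      · exact Or.inl (Or.inl h)
      · exact Or.inr (Or.inl h)
    · rcases Finset.mem_union.1 he' with h | h
      · exact Or.inl (Or.inr ⟨e', h, hh⟩)
      · exact Or.inr (Or.inr ⟨e', h, hh⟩)
  · exact Set.union_subset (HN_mono Finset.subset_union_left) (HN_mono Finset.subset_union_right)

/-- replace `η` by `σ` on `F` -/
def surg (F : Finset HexE) (σ η : Config) : Config := fun e => if e ∈ F then σ e else η e

lemma surg_mem {F : Finset HexE} {σ η : Config} {e : HexE} (h : e ∈ F) : surg F σ η e = σ e := by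
  simp [surg, h]

lemma surg_notMem {F : Finset HexE} {σ η : Config} {e : HexE} (h : e ∉ F) : surg F σ η e = η e := by
  simp [surg, h]

lemma measurable_surg (F : Finset HexE) (σ : Config) : Measurable (surg F σ) := by
  rw [measurable_pi_iff]
  intro e
  by_cases h : e ∈ F
  · simp only [surg, h, if_true]; exact measurable_const
  · simp only [surg, h, if_false]; exact measurable_pi_apply _

lemma surg_HN {F : Finset HexE} {σ η : Config} (h : ∀ e ∈ HN F, e ∉ F → σ e = η e) :
    ∀ e ∈ HN F, surg F σ η e = σ e := by
  intro e he
  by_cases hF : e ∈ F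
  · exact surg_mem hF
  · rw [surg_notMem hF, h e he hF]

lemma localConf_surg_mem {F : Finset HexE} {σ η : Config} (h : ∀ e ∈ HN F, e ∉ F → σ e = η e)
    {v : HexV} (hv : v ∈ verts F) : localConf (surg F σ η) v = localConf σ v := by
  funext i
  exact surg_HN h _ (Or.inr (edgesAt_mem_nbhd hv i))

lemma localConf_surg_notMem {F : Finset HexE} {σ η : Config}
    {v : HexV} (hv : v ∉ verts F) : localConf (surg F σ η) v = localConf η v := by
  funext i
  exact surg_notMem (edgesAt_notMem hv i)

lemma isConfig_surg {F : Finset HexE} {σ η : Config} (h : ∀ e ∈ HN F, e ∉ F → σ e = η e)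
    (hσ : IsConfig σ) (hη : IsConfig η) : IsConfig (surg F σ η) := by
  intro v
  by_cases hv : v ∈ verts F
  · rw [localConf_surg_mem h hv]; exact hσ v
  · rw [localConf_surg_notMem hv]; exact hη v

lemma weight_pos' {a b c : ℝ} (ha : 0 < a) (hb : 0 < b) (hc : 0 < c) (f : Fin 3 → Bool)
    (h1 : 1 ≤ (Finset.univ.filter fun i : Fin 3 => f i = true).card)
    (h2 : (Finset.univ.filter fun i : Fin 3 => f i = true).card ≤ 2) : 0 < weight a b c f := by
  rw [Finset.card_filter, Fin.sum_univ_three] at h1 h2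
  unfold weight
  rcases e2 : f 2 <;> rcases e1 : f 1 <;> rcases e0 : f 0 <;> simp_all

lemma weight_pos {a b c : ℝ} (ha : 0 < a) (hb : 0 < b) (hc : 0 < c) {σ : Config} (h : IsConfig σ)
    (v : HexV) : 0 < weight a b c (localConf σ v) :=
  weight_pos' ha hb hc _ (h v).1 (h v).2

lemma meas_cyl (S : Set HexE) (σ : Config) : MeasurableSet (cyl S σ) := by
  have : cyl S σ = ⋂ e ∈ S, (fun ω : Config => ω e) ⁻¹' {σ e} := by
    ext; simp [cyl]
  rw [this]
  exact MeasurableSet.biInter (Set.to_countable _)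
    (fun e _ => measurable_pi_apply e (measurableSet_singleton _))

lemma cyl_congr {S : Set HexE} {σ η : Config} (h : ∀ e ∈ S, σ e = η e) : cyl S σ = cyl S η := by
  ext ω
  exact ⟨fun hω e he => (hω e he).trans (h e he), fun hω e he => (hω e he).trans (h e he).symm⟩

/-- the generating pi-system -/
def cylSys (F : Finset HexE) : Set (Set Config) := {s | ∃ F' ρ, F ⊆ F' ∧ s = cyl (HN F') ρ}

lemma cylSys_pi (F : Finset HexE) : IsPiSystem (cylSys F) := by
  rintro _ ⟨F1, ρ1, h1, rfl⟩ _ ⟨F2, ρ2, h2, rfl⟩ ⟨η, hη1, hη2⟩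
  refine ⟨F1 ∪ F2, η, h1.trans Finset.subset_union_left, ?_⟩
  rw [HN_union]
  ext ω
  constructor
  · rintro ⟨g1, g2⟩ e (he | he)
    · rw [g1 e he, hη1 e he]
    · rw [g2 e he, hη2 e he]
  · intro g
    exact ⟨fun e he => by rw [g e (Or.inl he), hη1 e he],
      fun e he => by rw [g e (Or.inr he), hη2 e he]⟩

lemma cylSys_gen (F : Finset HexE) :
    (inferInstance : MeasurableSpace Config) = MeasurableSpace.generateFrom (cylSys F) := by
  apply le_antisymm
  · refine iSup_le fun e => ?_
    rw [← measurable_iff_comap_le]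
    refine @measurable_to_bool _ (MeasurableSpace.generateFrom (cylSys F)) _ ?_
    have : (fun ω : Config => ω e) ⁻¹' {true} =
        ⋃ T : Finset HexE, ⋃ _ : e ∈ T, cyl (HN (F ∪ {e})) (fun e' => decide (e' ∈ T)) := by
      ext ω
      simp only [Set.mem_preimage, Set.mem_singleton_iff, Set.mem_iUnion]
      have he : e ∈ HN (F ∪ {e}) := Or.inl (by simp)
      constructor
      · intro h
        refine ⟨(HN_finite (F ∪ {e})).toFinset.filter (fun e' => ω e' = true), ?_, ?_⟩
        · exact Finset.mem_filter.2 ⟨(Set.Finite.mem_toFinset _).2 he, h⟩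
        · intro e' he'
          have : (e' ∈ (HN_finite (F ∪ {e})).toFinset.filter (fun e' => ω e' = true)) ↔
              ω e' = true := by
            rw [Finset.mem_filter, Set.Finite.mem_toFinset]
            exact ⟨fun h => h.2, fun h => ⟨he', h⟩⟩
          beta_reduce
          by_cases hb : ω e' = true
          · rw [hb, decide_eq_true (this.2 hb)]
          · rw [decide_eq_false (fun h => hb (this.1 h))]
            simpa using hb
      · rintro ⟨T, hT, h⟩
        have := h e he
        simpa [hT] using this
    rw [this]
    refine @MeasurableSet.iUnion _ _ (MeasurableSpace.generateFrom (cylSys F)) _ _ fun T => ?_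
    refine @MeasurableSet.iUnion _ _ (MeasurableSpace.generateFrom (cylSys F)) _ _ fun hT => ?_
    exact MeasurableSpace.measurableSet_generateFrom ⟨_, _, Finset.subset_union_left, rfl⟩
  · apply MeasurableSpace.generateFrom_le
    rintro _ ⟨F', ρ, -, rfl⟩
    exact meas_cyl _ _

noncomputable def WW (a b c : ℝ) (F : Finset HexE) (σ : Config) : ENNReal :=
  ENNReal.ofReal (∏ v ∈ verts F, weight a b c (localConf σ v))

lemma WW_ne_top {a b c : ℝ} {F : Finset HexE} {σ : Config} : WW a b c F σ ≠ ⊤ := ENNReal.ofReal_ne_top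

lemma WW_ne_zero {a b c : ℝ} (ha : 0 < a) (hb : 0 < b) (hc : 0 < c) {F : Finset HexE} {σ : Config}
    (h : IsConfig σ) : WW a b c F σ ≠ 0 := by
  rw [WW, ENNReal.ofReal_ne_zero_iff]
  exact Finset.prod_pos fun v _ => weight_pos ha hb hc h v

lemma verts_mono {F F' : Finset HexE} (h : F ⊆ F') : verts F ⊆ verts F' :=
  Finset.biUnion_subset_biUnion_of_subset_left _ h

lemma WW_split {a b c : ℝ} (ha : 0 < a) (hb : 0 < b) (hc : 0 < c) {F F' : Finset HexE} (h : F ⊆ F')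
    {σ : Config} (hσ : IsConfig σ) :
    WW a b c F' σ = WW a b c F σ *
      ENNReal.ofReal (∏ v ∈ verts F' \ verts F, weight a b c (localConf σ v)) := by
  rw [WW, WW, ← ENNReal.ofReal_mul (Finset.prod_nonneg fun v _ => (weight_pos ha hb hc hσ v).le),
    mul_comm, Finset.prod_sdiff (verts_mono h)]

lemma WW_congr {a b c : ℝ} {F : Finset HexE} {σ η : Config}
    (h : ∀ v ∈ verts F, localConf σ v = localConf η v) : WW a b c F σ = WW a b c F η := by
  rw [WW, WW, Finset.prod_congr rfl fun v hv => by rw [h v hv]]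

lemma gibbs_map {a b c : ℝ} (ha : 0 < a) (hb : 0 < b) (hc : 0 < c) {μ : Measure Config}
    (hG : IsGibbs a b c μ) {F : Finset HexE} {σ σ' : Config} (hσ : IsConfig σ) (hσ' : IsConfig σ')
    (hoff : ∀ e ∉ F, σ e = σ' e) {X : Set Config} (hX : MeasurableSet X) :
    WW a b c F σ' * μ (cyl (HN F) σ ∩ surg F σ' ⁻¹' X) = WW a b c F σ * μ (cyl (HN F) σ' ∩ X) := by
  obtain ⟨hprob, hΩ, hgib⟩ := hG
  have hΩ0 : ∀ s : Set Config, (∀ ω ∈ s, ¬ IsConfig ω) → μ s = 0 := by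
    intro s hs
    have h1 : ∀ᵐ ω ∂μ, IsConfig ω := by
      rw [← prob_compl_eq_zero_iff₀] at hΩ
      · exact hΩ
      · refine MeasurableSet.nullMeasurableSet ?_
        apply measurableSet_setOfPred.2
        refine Measurable.forall fun v => ?_
        have hm : Measurable fun ω : Config => localConf ω v := by
          rw [measurable_pi_iff]; intro i; exact measurable_pi_apply _
        exact (measurable_of_countable (fun f : Fin 3 → Bool =>
          1 ≤ (Finset.univ.filter fun i : Fin 3 => f i = true).card ∧
          (Finset.univ.filter fun i : Fin 3 => f i = true).card ≤ 2)).comp hm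
    exact measure_mono_null (fun ω hω h => hs ω hω h) h1
  have hmeas : Measurable (surg F σ') := measurable_surg F σ'
  set μ1 := WW a b c F σ' • (μ.restrict (cyl (HN F) σ)).map (surg F σ') with hμ1
  set μ2 := WW a b c F σ • μ.restrict (cyl (HN F) σ') with hμ2
  have e1 : ∀ X, MeasurableSet X → μ1 X = WW a b c F σ' * μ (cyl (HN F) σ ∩ surg F σ' ⁻¹' X) := by
    intro X hX
    rw [hμ1, Measure.smul_apply, Measure.map_apply hmeas hX,
      Measure.restrict_apply (hmeas hX), Set.inter_comm, smul_eq_mul]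
  have e2 : ∀ X, MeasurableSet X → μ2 X = WW a b c F σ * μ (cyl (HN F) σ' ∩ X) := by
    intro X hX
    rw [hμ2, Measure.smul_apply, Measure.restrict_apply hX, Set.inter_comm, smul_eq_mul]
  have hfin : IsFiniteMeasure μ1 := by
    constructor
    rw [e1 _ MeasurableSet.univ]
    exact ENNReal.mul_lt_top WW_ne_top.lt_top (measure_lt_top _ _)
  have : μ1 = μ2 := by
    refine ext_of_generate_finite (cylSys F) (cylSys_gen F) (cylSys_pi F) ?_ ?_
    · rintro _ ⟨F', ρ, hF, rfl⟩
      rw [e1 _ (meas_cyl _ _), e2 _ (meas_cyl _ _)]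
      by_cases hex : ∃ η, IsConfig η ∧ η ∈ cyl (HN F) σ' ∩ cyl (HN F') ρ
      · obtain ⟨η, hη, hη1, hη2⟩ := hex
        have hag : ∀ e ∈ HN F, e ∉ F → σ e = η e := fun e he heF => by
          rw [hoff e heF, hη1 e he]
        have i2 : cyl (HN F) σ' ∩ cyl (HN F') ρ = cyl (HN F') η := by
          ext ω
          constructor
          · rintro ⟨g1, g2⟩ e he
            rw [g2 e he, hη2 e he]
          · intro g
            exact ⟨fun e he => by rw [g e (HN_mono hF he), hη1 e he],
              fun e he => by rw [g e he, hη2 e he]⟩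
        have i1 : cyl (HN F) σ ∩ surg F σ' ⁻¹' cyl (HN F') ρ = cyl (HN F') (surg F σ η) := by
          ext ω
          constructor
          · rintro ⟨g1, g2⟩ e he
            by_cases heF : e ∈ F
            · rw [surg_mem heF, g1 e (Or.inl heF)]
            · rw [surg_notMem heF, hη2 e he, ← g2 e he, surg_notMem heF]
          · intro g
            constructor
            · intro e he
              rw [g e (HN_mono hF he), surg_HN hag e he]
            · intro e he
              by_cases heF : e ∈ F
              · rw [surg_mem heF, ← hη2 e he, hη1 e (Or.inl heF)]
              · rw [surg_notMem heF, g e he, surg_notMem heF, hη2 e he]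
        rw [i1, i2]
        have hs : IsConfig (surg F σ η) := isConfig_surg hag hσ hη
        have hg : μ (cyl (HN F') (surg F σ η)) * WW a b c F' η =
            μ (cyl (HN F') η) * WW a b c F' (surg F σ η) :=
          hgib F' (surg F σ η) η hs hη (fun e he => surg_notMem (fun h => he (hF h)))
        rw [WW_split ha hb hc hF hη, WW_split ha hb hc hF hs] at hg
        have q1 : WW a b c F (surg F σ η) = WW a b c F σ :=
          WW_congr fun v hv => localConf_surg_mem hag hv
        have q2 : WW a b c F η = WW a b c F σ' := WW_congr fun v hv => by
          funext i
          exact hη1 _ (Or.inr (edgesAt_mem_nbhd hv i))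
        have q3 : ∏ v ∈ verts F' \ verts F, weight a b c (localConf (surg F σ η) v) =
            ∏ v ∈ verts F' \ verts F, weight a b c (localConf η v) :=
          Finset.prod_congr rfl fun v hv => by
            rw [localConf_surg_notMem (Finset.mem_sdiff.1 hv).2]
        rw [q1, q2, q3, ← mul_assoc, ← mul_assoc] at hg
        have hne : ENNReal.ofReal (∏ v ∈ verts F' \ verts F, weight a b c (localConf η v)) ≠ 0 := by
          rw [ENNReal.ofReal_ne_zero_iff]
          exact Finset.prod_pos fun v _ => weight_pos ha hb hc hη v
        have := (ENNReal.mul_left_inj hne ENNReal.ofReal_ne_top).1 hg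
        rw [mul_comm, this, mul_comm]
      · rw [hΩ0 (cyl (HN F) σ ∩ surg F σ' ⁻¹' cyl (HN F') ρ), hΩ0 (cyl (HN F) σ' ∩ cyl (HN F') ρ)]
        · simp
        · intro ω hω h
          exact hex ⟨ω, h, hω⟩
        · intro ω hω h
          have hag : ∀ e ∈ HN F, e ∉ F → σ' e = ω e := fun e he heF => by
            rw [← hoff e heF, hω.1 e he]
          exact hex ⟨surg F σ' ω, isConfig_surg hag hσ' h, surg_HN hag, hω.2⟩
    · rw [e1 _ MeasurableSet.univ, e2 _ MeasurableSet.univ]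
      simp only [Set.preimage_univ, Set.inter_univ]
      have := hgib F σ σ' hσ hσ' hoff
      rw [mul_comm, mul_comm (WW a b c F σ)]
      exact this
  rw [← e1 X hX, ← e2 X hX, this]

open MeasureTheory

def patt (H : Set HexE) (T : Finset HexE) (ω : Config) : Prop := ∀ e ∈ H, (ω e = true ↔ e ∈ T)

lemma exists_patt {H : Set HexE} (hH : H.Finite) (ω : Config) :
    ∃ T ∈ hH.toFinset.powerset, patt H T ω := by
  refine ⟨hH.toFinset.filter (fun e => ω e = true), ?_, ?_⟩
  · rw [Finset.mem_powerset]; exact Finset.filter_subset _ _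
  · intro e he
    rw [Finset.mem_filter, Set.Finite.mem_toFinset]
    exact ⟨fun h => ⟨he, h⟩, fun h => h.2⟩

lemma patt_agree {H : Set HexE} {T : Finset HexE} {ω ω' : Config} (h : patt H T ω) (h' : patt H T ω') :
    ∀ e ∈ H, ω e = ω' e := by
  intro e he
  have := (h e he).trans (h' e he).symm
  exact Bool.eq_iff_iff.2 this

lemma mod_patt {a b c : ℝ} (ha : 0 < a) (hb : 0 < b) (hc : 0 < c) {μ : Measure Config}
    (hG : IsGibbs a b c μ) (F : Finset HexE) (p : Finset HexE × Finset HexE) :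
    ∃ K : ENNReal, K ≠ ⊤ ∧ ∀ A B : Set Config, MeasurableSet B →
      (∀ ω ∈ A, IsConfig ω ∧ patt (HN F) p.1 ω ∧
        ∃ ω' ∈ B, IsConfig ω' ∧ patt (HN F) p.2 ω' ∧ ∀ e ∉ F, ω' e = ω e) → μ A ≤ K * μ B := by
  by_cases hex : ∃ σ σ' : Config, IsConfig σ ∧ IsConfig σ' ∧ (∀ e ∉ F, σ e = σ' e) ∧
      patt (HN F) p.1 σ ∧ patt (HN F) p.2 σ'
  · obtain ⟨σ, σ', hσ, hσ', hoff, hp, hp'⟩ := hex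
    refine ⟨(WW a b c F σ')⁻¹ * WW a b c F σ, ENNReal.mul_ne_top
      (ENNReal.inv_ne_top.2 (WW_ne_zero ha hb hc hσ')) WW_ne_top, ?_⟩
    intro A B hB h
    have hsub : A ⊆ cyl (HN F) σ ∩ surg F σ' ⁻¹' B := by
      intro ω hω
      obtain ⟨h1, h2, ω', hω'B, h3, h4, h5⟩ := h ω hω
      refine ⟨patt_agree h2 hp, ?_⟩
      have : surg F σ' ω = ω' := by
        funext e
        by_cases he : e ∈ F
        · rw [surg_mem he, patt_agree hp' h4 e (Or.inl he)]
        · rw [surg_notMem he, h5 e he]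
      rw [Set.mem_preimage, this]
      exact hω'B
    refine (measure_mono hsub).trans ?_
    have := gibbs_map ha hb hc hG hσ hσ' hoff hB
    have h0 := WW_ne_zero ha hb hc (F := F) hσ'
    have h1 : μ (cyl (HN F) σ ∩ surg F σ' ⁻¹' B) =
        (WW a b c F σ')⁻¹ * (WW a b c F σ' * μ (cyl (HN F) σ ∩ surg F σ' ⁻¹' B)) := by
      rw [← mul_assoc, ENNReal.inv_mul_cancel h0 WW_ne_top, one_mul]
    rw [h1, this, ← mul_assoc]
    gcongr
    exact Set.inter_subset_right
  · refine ⟨0, by simp, ?_⟩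
    intro A B hB h
    have : A = ∅ := by
      apply Set.eq_empty_of_forall_notMem
      intro ω hω
      obtain ⟨h1, h2, ω', hω'B, h3, h4, h5⟩ := h ω hω
      exact hex ⟨ω, ω', h1, h3, fun e he => (h5 e he).symm, h2, h4⟩
    simp [this]

lemma mod_lemma {a b c : ℝ} (ha : 0 < a) (hb : 0 < b) (hc : 0 < c) {μ : Measure Config}
    (hG : IsGibbs a b c μ) (F : Finset HexE) :
    ∃ K : ENNReal, K ≠ ⊤ ∧ ∀ A B : Set Config, MeasurableSet B →
      (∀ ω ∈ A, IsConfig ω ∧ ∃ ω' ∈ B, IsConfig ω' ∧ ∀ e ∉ F, ω' e = ω e) → μ A ≤ K * μ B := by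
  choose K hK1 hK2 using mod_patt ha hb hc hG F
  set PP := (HN_finite F).toFinset.powerset with hPP
  refine ⟨∑ p ∈ PP ×ˢ PP, K p, ?_, ?_⟩
  · exact ENNReal.sum_ne_top.2 fun p _ => hK1 p
  · intro A B hB h
    have hsub : A ⊆ ⋃ p ∈ PP ×ˢ PP, {ω | ω ∈ A ∧ patt (HN F) p.1 ω ∧
        ∃ ω' ∈ B, IsConfig ω' ∧ patt (HN F) p.2 ω' ∧ ∀ e ∉ F, ω' e = ω e} := by
      intro ω hω
      obtain ⟨h1, ω', hω', h2, h3⟩ := h ω hω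
      obtain ⟨T, hT, hTp⟩ := exists_patt (HN_finite F) ω
      obtain ⟨T', hT', hTp'⟩ := exists_patt (HN_finite F) ω'
      simp only [Set.mem_iUnion]
      exact ⟨(T, T'), Finset.mk_mem_product hT hT', hω, hTp, ω', hω', h2, hTp', h3⟩
    refine (measure_mono hsub).trans ((measure_biUnion_finset_le _ _).trans ?_)
    rw [Finset.sum_mul]
    refine Finset.sum_le_sum fun p _ => hK2 p _ B hB ?_
    rintro ω ⟨h1, h2, h3⟩
    exact ⟨(h ω h1).1, h2, h3⟩

/-- local events -/
def locAlg : Set (Set Config) :=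
  {B | MeasurableSet B ∧ ∃ G : Finset HexE, ∀ ω ω' : Config, (∀ e ∈ G, ω e = ω' e) → ω ∈ B → ω' ∈ B}

lemma locAlg_alg : IsSetAlgebra locAlg where
  empty_mem := ⟨MeasurableSet.empty, ∅, fun _ _ _ h => h⟩
  compl_mem := by
    rintro s ⟨hs, G, hG⟩
    exact ⟨hs.compl, G, fun ω ω' h hω hω' => hω (hG ω' ω (fun e he => (h e he).symm) hω')⟩
  union_mem := by
    rintro s t ⟨hs, G, hG⟩ ⟨ht, G', hG'⟩
    refine ⟨hs.union ht, G ∪ G', fun ω ω' h hω => ?_⟩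
    rcases hω with hω | hω
    · exact Or.inl (hG ω ω' (fun e he => h e (Finset.mem_union_left _ he)) hω)
    · exact Or.inr (hG' ω ω' (fun e he => h e (Finset.mem_union_right _ he)) hω)

lemma locAlg_gen :
    (inferInstance : MeasurableSpace Config) = MeasurableSpace.generateFrom locAlg := by
  apply le_antisymm
  · refine iSup_le fun e => ?_
    rw [← measurable_iff_comap_le]
    refine @measurable_to_bool _ (MeasurableSpace.generateFrom locAlg) _ ?_
    apply MeasurableSpace.measurableSet_generateFrom
    refine ⟨measurable_pi_apply e (measurableSet_singleton _), {e}, ?_⟩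
    intro ω ω' h hω
    have := h e (by simp)
    simp only [Set.mem_preimage, Set.mem_singleton_iff] at *
    rw [← this, hω]
  · apply MeasurableSpace.generateFrom_le
    rintro _ ⟨h, -⟩
    exact h

lemma exists_shift_disjoint (F G : Finset HexE) : ∃ g : ℤ × ℤ, ∀ e ∈ G, shiftE g e ∉ F := by
  refine ⟨(∑ e ∈ F, |e.1| + ∑ e ∈ G, |e.1| + 1, 0), fun e he hF => ?_⟩
  have h1 : |e.1| ≤ ∑ e ∈ G, |e.1| :=
    Finset.single_le_sum (f := fun e : HexE => |e.1|) (fun _ _ => abs_nonneg _) he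
  have h2 := Finset.single_le_sum (f := fun e : HexE => |e.1|) (fun _ _ => abs_nonneg _) hF
  simp only [shiftE] at h2
  have h3 := le_abs_self (e.1 + (∑ e ∈ F, |e.1| + ∑ e ∈ G, |e.1| + 1))
  have h4 := neg_abs_le e.1
  linarith

lemma tail_lemma {a b c : ℝ} (ha : 0 < a) (hb : 0 < b) (hc : 0 < c) {μ : Measure Config}
    (hG : IsGibbs a b c μ) (hTI : TransInvariant μ) (F : Finset HexE) {I A : Set Config}
    (hI : MeasurableSet I) (hIinv : ∀ g, shiftConfig g ⁻¹' I = I) (hA : A ⊆ I)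
    (h : ∀ ω ∈ A, IsConfig ω ∧ ∃ ω', ω' ∉ I ∧ IsConfig ω' ∧ ∀ e ∉ F, ω' e = ω e) : μ A = 0 := by
  haveI := hG.1
  obtain ⟨K, hK, hmod⟩ := mod_lemma ha hb hc hG F
  have hdense := Measure.MeasureDense.of_generateFrom_isSetAlgebra_finite μ locAlg_alg locAlg_gen
  have key : ∀ ε : ℝ, 0 < ε → μ A ≤ (K + 1) * ENNReal.ofReal ε := by
    intro ε hε
    obtain ⟨B, ⟨hBm, G, hBG⟩, hB⟩ := hdense.approx I hI (measure_ne_top _ _) ε hε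
    obtain ⟨g, hg⟩ := exists_shift_disjoint F G
    set B' := shiftConfig g ⁻¹' B with hB'
    have hB'm : MeasurableSet B' := measurable_shiftConfig g hBm
    have hsymm : μ (symmDiff I B') < ENNReal.ofReal ε := by
      have : symmDiff I B' = shiftConfig g ⁻¹' (symmDiff I B) := by
        rw [Set.preimage_symmDiff, hIinv]
      rw [this, ← Measure.map_apply (measurable_shiftConfig g) (hI.symmDiff hBm), hTI]
      exact hB
    have h1 : μ (A ∩ B') ≤ K * μ (B' \ I) := by
      refine hmod _ _ (hB'm.diff hI) ?_
      rintro ω ⟨hωA, hωB⟩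
      obtain ⟨hc, ω', hω'I, hω', hoff⟩ := h ω hωA
      refine ⟨hc, ω', ⟨?_, hω'I⟩, hω', hoff⟩
      refine hBG _ _ ?_ hωB
      intro e he
      exact (hoff _ (hg e he)).symm
    calc μ A ≤ μ ((A ∩ B') ∪ (I \ B')) := by
          refine measure_mono fun ω hω => ?_
          by_cases hB : ω ∈ B'
          · exact Or.inl ⟨hω, hB⟩
          · exact Or.inr ⟨hA hω, hB⟩
      _ ≤ μ (A ∩ B') + μ (I \ B') := measure_union_le _ _
      _ ≤ K * ENNReal.ofReal ε + ENNReal.ofReal ε := by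
          gcongr
          · refine h1.trans ?_
            gcongr
            exact (measure_mono (Set.subset_union_right)).trans hsymm.le
          · exact (measure_mono (Set.subset_union_left)).trans hsymm.le
      _ = (K + 1) * ENNReal.ofReal ε := by ring
  have ht : Filter.Tendsto (fun ε : ℝ => (K + 1) * ENNReal.ofReal ε) (nhdsWithin 0 (Set.Ioi 0)) (nhds 0) := by
    have : Filter.Tendsto (fun ε : ℝ => (K + 1) * ENNReal.ofReal ε) (nhds 0)
        (nhds ((K + 1) * ENNReal.ofReal 0)) :=
      ENNReal.Tendsto.const_mul (ENNReal.continuous_ofReal.tendsto 0) (Or.inr (by simp [hK]))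
    simp only [ENNReal.ofReal_zero, mul_zero] at this
    exact this.mono_left nhdsWithin_le_nhds
  have : μ A ≤ 0 := ge_of_tendsto ht (by
    filter_upwards [self_mem_nhdsWithin] with ε hε using key ε hε)
  exact le_antisymm this bot_le

open MeasureTheory

lemma isConfig_aux (f : Fin 3 → Bool) : (1 ≤ (Finset.univ.filter fun i : Fin 3 => f i = true).card ∧
    (Finset.univ.filter fun i : Fin 3 => f i = true).card ≤ 2) ↔ ∃ i j, f i ≠ f j := by
  revert f
  decide

lemma isConfig_iff (ω : Config) : IsConfig ω ↔ ∀ v, ∃ i j, localConf ω v i ≠ localConf ω v j :=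
  forall_congr' fun _ => isConfig_aux _

lemma mem_confSet {ω : Config} {τ : Fin 3 → Bool} {v : HexV} :
    v ∈ confSet ω τ ↔ ∀ i, ω (edgesAt v i) = τ i := by
  change _ = _ ↔ _
  rw [funext_iff]; rfl

lemma edgesAt_type (v : HexV) (i : Fin 3) : (edgesAt v i).2.2 = i := by
  obtain ⟨x, y, t⟩ := v
  cases t <;> fin_cases i <;> simp [edgesAt]

lemma adjA (x y : ℤ) : HexAdj (x, y, true) (x, y, false) :=
  ⟨by simp, (x, y, 0), Or.inl rfl, Or.inr rfl⟩
lemma adjB (x y : ℤ) : HexAdj (x, y, true) (x + 1, y, false) :=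
  ⟨by simp, (x, y, 1), Or.inl rfl, Or.inr rfl⟩
lemma adjC (x y : ℤ) : HexAdj (x, y, true) (x, y + 1, false) :=
  ⟨by simp, (x, y, 2), Or.inl rfl, Or.inr rfl⟩

def FillProp (τ : Fin 3 → Bool) (g : ℤ × ℤ) : Prop :=
  ∀ ω, IsConfig ω → ∀ v₁ v₂ : HexV, v₁.2.2 = false → v₂.2.2 = true →
    (∃ᶠ k : ℕ in Filter.atTop, shiftV (k • g) v₁ ∈ confSet ω τ) →
    (∃ᶠ k : ℕ in Filter.atTop, shiftV (k • (-g)) v₂ ∈ confSet ω τ) →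
    ∀ K : Finset HexV, ∃ R : Finset HexV, K ⊆ R ∧ ∃ ω', IsConfig ω' ∧
      (∀ e, (end1 e ∉ R ∨ end2 e ∉ R) → ω' e = ω e) ∧
      confSet ω τ ⊆ confSet ω' τ ∧ confSet ω' τ ⊆ confSet ω τ ∪ R ∧
      ∀ x ∈ confSet ω' τ ∩ R, ∀ y ∈ confSet ω' τ ∩ R, Conn (confSet ω' τ ∩ R) x y

/-- the modified configuration -/
def fillC (R : Finset HexV) (τ : Fin 3 → Bool) (ω : Config) : Config := fun e =>
  if end1 e ∈ R ∧ end2 e ∈ R then τ e.2.2 else ω e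

lemma fillC_sub (R : Finset HexV) (τ : Fin 3 → Bool) (ω : Config) :
    confSet ω τ ⊆ confSet (fillC R τ ω) τ := by
  intro v hv
  rw [mem_confSet] at *
  intro i
  unfold fillC
  split_ifs
  · rw [edgesAt_type]
  · exact hv i

lemma fillC_out {R : Finset HexV} (τ : Fin 3 → Bool) (ω : Config) {v : HexV} (hv : v ∉ R) :
    localConf (fillC R τ ω) v = localConf ω v := by
  funext i
  unfold localConf fillC
  rw [if_neg]
  rintro ⟨h1, h2⟩
  rcases end_edgesAt v i with h | h
  · rw [h] at h1; exact hv h1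
  · rw [h] at h2; exact hv h2

lemma fillC_sup (R : Finset HexV) (τ : Fin 3 → Bool) (ω : Config) :
    confSet (fillC R τ ω) τ ⊆ confSet ω τ ∪ R := by
  intro v hv
  by_cases hR : v ∈ R
  · exact Or.inr hR
  · left
    have hv : _ = _ := hv
    rw [fillC_out τ ω hR] at hv
    exact hv

lemma fill_rect (s : Bool) (ω : Config) (hω : IsConfig ω) (X1 X2 Y1 Y2 : ℤ) (hX : X1 + 3 ≤ X2)
    (hY : Y1 + 3 ≤ Y2) (hT : (X2, Y2, false) ∈ confSet ω ![s, !s, !s])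
    (hT' : (X1, Y1, true) ∈ confSet ω ![s, !s, !s]) (R : Finset HexV)
    (hR : ∀ x y t, (x, y, t) ∈ R ↔ X1 ≤ x ∧ x ≤ X2 ∧ Y1 ≤ y ∧ y ≤ Y2 ∧ ¬ (x = X2 ∧ y = Y2) ∧
      ¬ (x = X1 ∧ y = Y1)) :
    IsConfig (fillC R ![s, !s, !s] ω) ∧
    ∀ v ∈ confSet (fillC R ![s, !s, !s] ω) ![s, !s, !s] ∩ R,
    ∀ v' ∈ confSet (fillC R ![s, !s, !s] ω) ![s, !s, !s] ∩ R,
      Conn (confSet (fillC R ![s, !s, !s] ω) ![s, !s, !s] ∩ R) v v' := by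
  set τ : Fin 3 → Bool := ![s, !s, !s] with hτ
  set ω' := fillC R τ ω with hω'
  have hT1 : ω (X2 - 1, Y2, 1) = !s := by
    have := mem_confSet.1 hT 1; simpa [edgesAt, hτ] using this
  have hT2 : ω (X2, Y2 - 1, 2) = !s := by
    have := mem_confSet.1 hT 2; simpa [edgesAt, hτ] using this
  have hT1' : ω (X1, Y1, 1) = !s := by
    have := mem_confSet.1 hT' 1; simpa [edgesAt, hτ] using this
  have hT2' : ω (X1, Y1, 2) = !s := by
    have := mem_confSet.1 hT' 2; simpa [edgesAt, hτ] using this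
  have wa : ∀ x y, (x, y, true) ∈ R → ω' (x, y, 0) = s := by
    intro x y h
    have h' : (x, y, false) ∈ R := (hR _ _ _).2 ((hR _ _ _).1 h)
    simp [hω', fillC, end1, end2, h, h', hτ]
  have wb : ∀ x y, (x, y, true) ∈ R → (x + 1, y, false) ∈ R → ω' (x, y, 1) = !s := by
    intro x y h h'
    simp [hω', fillC, end1, end2, h, h', hτ]
  have wc : ∀ x y, (x, y, true) ∈ R → (x, y + 1, false) ∈ R → ω' (x, y, 2) = !s := by
    intro x y h h'
    simp [hω', fillC, end1, end2, h, h', hτ]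
  have wb' : ∀ x y, (x, y, true) ∈ R → (x + 1, y, false) ∉ R → ω' (x, y, 1) = ω (x, y, 1) := by
    intro x y h h'
    simp [hω', fillC, end1, end2, h, h']
  have wc' : ∀ x y, (x, y, true) ∈ R → (x, y + 1, false) ∉ R → ω' (x, y, 2) = ω (x, y, 2) := by
    intro x y h h'
    simp [hω', fillC, end1, end2, h, h']
  have wb'' : ∀ x y, (x, y, true) ∉ R → ω' (x, y, 1) = ω (x, y, 1) := by
    intro x y h
    simp [hω', fillC, end1, end2, h]
  have wc'' : ∀ x y, (x, y, true) ∉ R → ω' (x, y, 2) = ω (x, y, 2) := by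
    intro x y h
    simp [hω', fillC, end1, end2, h]
  constructor
  · rw [isConfig_iff]
    intro v
    by_cases hv : v ∈ R
    swap
    · rw [hω', fillC_out τ ω hv]; exact (isConfig_iff ω).1 hω v
    obtain ⟨x, y, t⟩ := v
    have hne : s ≠ !s := by cases s <;> decide
    cases t with
    | true =>
      have ha : localConf ω' (x, y, true) 0 = s := wa x y hv
      by_cases h1 : (x + 1, y, false) ∈ R
      · refine ⟨0, 1, ?_⟩
        have : localConf ω' (x, y, true) 1 = !s := wb x y hv h1
        rw [ha, this]; exact hne
      by_cases h2 : (x, y + 1, false) ∈ R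
      · refine ⟨0, 2, ?_⟩
        have : localConf ω' (x, y, true) 2 = !s := wc x y hv h2
        rw [ha, this]; exact hne
      have hv' := (hR _ _ _).1 hv
      rw [hR] at h1 h2
      have hcase : (x = X2 ∧ y = Y2 - 1) ∨ (x = X2 - 1 ∧ y = Y2) := by omega
      rcases hcase with ⟨rfl, rfl⟩ | ⟨rfl, rfl⟩
      · refine ⟨0, 2, ?_⟩
        have : localConf ω' (x, Y2 - 1, true) 2 = !s :=
          (wc' _ _ hv (by rw [hR]; omega)).trans hT2
        rw [ha, this]; exact hne
      · refine ⟨0, 1, ?_⟩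
        have : localConf ω' (X2 - 1, y, true) 1 = !s :=
          (wb' _ _ hv (by rw [hR]; omega)).trans hT1
        rw [ha, this]; exact hne
    | false =>
      have hv' := (hR _ _ _).1 hv
      have ha : localConf ω' (x, y, false) 0 = s := wa x y ((hR _ _ _).2 hv')
      have eb : localConf ω' (x, y, false) 1 = ω' (x - 1, y, 1) := by
        simp [localConf, edgesAt]
      have ec : localConf ω' (x, y, false) 2 = ω' (x, y - 1, 2) := by
        simp [localConf, edgesAt]
      by_cases h1 : (x - 1, y, true) ∈ R
      · refine ⟨0, 1, ?_⟩
        rw [ha, eb, wb _ _ h1 (by simpa using hv)]; exact hne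
      by_cases h2 : (x, y - 1, true) ∈ R
      · refine ⟨0, 2, ?_⟩
        rw [ha, ec, wc _ _ h2 (by simpa using hv)]; exact hne
      have h1' := h1
      have h2' := h2
      rw [hR] at h1 h2
      have hcase : (x = X1 ∧ y = Y1 + 1) ∨ (x = X1 + 1 ∧ y = Y1) := by omega
      rcases hcase with ⟨rfl, rfl⟩ | ⟨rfl, rfl⟩
      · refine ⟨0, 2, ?_⟩
        rw [ha, ec, wc'' _ _ h2']
        simp only [add_sub_cancel_right]
        rw [hT2']; exact hne
      · refine ⟨0, 1, ?_⟩
        rw [ha, eb, wb'' _ _ h1']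
        simp only [add_sub_cancel_right]
        rw [hT1']; exact hne
  · set D := confSet ω' τ ∩ R with hD
    have upD : ∀ x y, (x, y, true) ∈ R → (x + 1, y, false) ∈ R → (x, y + 1, false) ∈ R →
        (x, y, true) ∈ D := by
      intro x y h1 h2 h3
      refine ⟨?_, h1⟩
      rw [mem_confSet]
      intro i
      fin_cases i
      · exact wa x y h1
      · exact wb x y h1 h2
      · exact wc x y h1 h3
    have loD : ∀ x y, (x, y, false) ∈ R → (x - 1, y, true) ∈ R → (x, y - 1, true) ∈ R →
        (x, y, false) ∈ D := by
      intro x y h1 h2 h3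
      refine ⟨?_, h1⟩
      rw [mem_confSet]
      intro i
      fin_cases i
      · exact wa x y ((hR _ _ _).2 ((hR _ _ _).1 h1))
      · have := wb _ _ h2 (by simpa using h1)
        simpa [edgesAt, hτ] using this
      · have := wc _ _ h3 (by simpa using h1)
        simpa [edgesAt, hτ] using this
    have intU : ∀ x y, X1 < x → x < X2 → Y1 < y → y < Y2 → (x, y, true) ∈ D := by
      intro x y h1 h2 h3 h4
      apply upD <;> rw [hR] <;> omega
    have intL : ∀ x y, X1 < x → x < X2 → Y1 < y → y < Y2 → (x, y, false) ∈ D := by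
      intro x y h1 h2 h3 h4
      apply loD <;> rw [hR] <;> omega
    have stepA : ∀ x y, (x, y, true) ∈ D → (x, y, false) ∈ D → Conn D (x, y, true) (x, y, false) :=
      fun x y h1 h2 => .single ⟨adjA x y, h1, h2⟩
    have stepB : ∀ x y, (x, y, true) ∈ D → (x + 1, y, false) ∈ D →
        Conn D (x, y, true) (x + 1, y, false) := fun x y h1 h2 => .single ⟨adjB x y, h1, h2⟩
    have stepC : ∀ x y, (x, y, true) ∈ D → (x, y + 1, false) ∈ D →
        Conn D (x, y, true) (x, y + 1, false) := fun x y h1 h2 => .single ⟨adjC x y, h1, h2⟩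
    -- interior
    have row : ∀ (n : ℕ) (y : ℤ), Y1 < y → y < Y2 → X1 + 1 + n < X2 →
        Conn D (X1 + 1, y, true) (X1 + 1 + n, y, true) := by
      intro n y h1 h2
      induction n with
      | zero => intro _; simpa using Relation.ReflTransGen.refl
      | succ n ih =>
        intro h3
        push_cast at h3 ⊢
        have e1 := stepB (X1 + 1 + n) y (intU _ _ (by omega) (by omega) h1 h2)
          (intL _ _ (by omega) (by omega) h1 h2)
        have e2 := stepA (X1 + 1 + n + 1) y (intU _ _ (by omega) (by omega) h1 h2)
          (intL _ _ (by omega) (by omega) h1 h2)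
        have := ((ih (by omega)).trans e1).trans (conn_symm e2)
        rwa [← add_assoc]
    have col : ∀ (n : ℕ), Y1 + 1 + n < Y2 →
        Conn D (X1 + 1, Y1 + 1, true) (X1 + 1, Y1 + 1 + n, true) := by
      intro n
      induction n with
      | zero => intro _; simpa using Relation.ReflTransGen.refl
      | succ n ih =>
        intro h3
        push_cast at h3 ⊢
        have e1 := stepC (X1 + 1) (Y1 + 1 + n) (intU _ _ (by omega) (by omega) (by omega) (by omega))
          (intL _ _ (by omega) (by omega) (by omega) (by omega))
        have e2 := stepA (X1 + 1) (Y1 + 1 + n + 1) (intU _ _ (by omega) (by omega) (by omega) (by omega))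
          (intL _ _ (by omega) (by omega) (by omega) (by omega))
        have := ((ih (by omega)).trans e1).trans (conn_symm e2)
        rwa [← add_assoc]
    have baseU : ∀ x y, X1 < x → x < X2 → Y1 < y → y < Y2 →
        Conn D (x, y, true) (X1 + 1, Y1 + 1, true) := by
      intro x y h1 h2 h3 h4
      have a1 := col (y - (Y1 + 1)).toNat (by omega)
      have a2 := row (x - (X1 + 1)).toNat y h3 h4 (by omega)
      have q1 : Y1 + 1 + ((y - (Y1 + 1)).toNat : ℤ) = y := by omega
      have q2 : X1 + 1 + ((x - (X1 + 1)).toNat : ℤ) = x := by omega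
      rw [q1] at a1
      rw [q2] at a2
      exact conn_symm (a1.trans a2)
    have baseL : ∀ x y, X1 < x → x < X2 → Y1 < y → y < Y2 →
        Conn D (x, y, false) (X1 + 1, Y1 + 1, true) := by
      intro x y h1 h2 h3 h4
      exact (conn_symm (stepA x y (intU _ _ h1 h2 h3 h4) (intL _ _ h1 h2 h3 h4))).trans
        (baseU x y h1 h2 h3 h4)
    have stepB' : ∀ x y, (x - 1, y, true) ∈ D → (x, y, false) ∈ D →
        Conn D (x, y, false) (x - 1, y, true) := fun x y h1 h2 => by
      have := stepB (x - 1) y h1 (by simpa using h2)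
      exact conn_symm (by simpa using this)
    have stepC' : ∀ x y, (x, y - 1, true) ∈ D → (x, y, false) ∈ D →
        Conn D (x, y, false) (x, y - 1, true) := fun x y h1 h2 => by
      have := stepC x (y - 1) h1 (by simpa using h2)
      exact conn_symm (by simpa using this)
    have base : ∀ v ∈ D, Conn D v (X1 + 1, Y1 + 1, true) := by
      rintro ⟨x, y, t⟩ hv
      have hv' := (hR _ _ _).1 hv.2
      by_cases hint : X1 < x ∧ x < X2 ∧ Y1 < y ∧ y < Y2
      · obtain ⟨h1, h2, h3, h4⟩ := hint
        cases t
        · exact baseL x y h1 h2 h3 h4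
        · exact baseU x y h1 h2 h3 h4
      cases t with
      | true =>
        by_cases c1 : x < X2 - 1 ∧ Y1 < y ∧ y < Y2
        · exact (stepB x y hv (intL _ _ (by omega) (by omega) (by omega) (by omega))).trans
            (baseL _ _ (by omega) (by omega) (by omega) (by omega))
        by_cases c2 : y < Y2 - 1 ∧ X1 < x ∧ x < X2
        · exact (stepC x y hv (intL _ _ (by omega) (by omega) (by omega) (by omega))).trans
            (baseL _ _ (by omega) (by omega) (by omega) (by omega))
        by_cases c3 : x = X1 ∧ y = Y2
        · have hm : (x + 1, y, false) ∈ D := by apply loD <;> rw [hR] <;> omega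
          exact ((stepB x y hv hm).trans
            (stepC' _ _ (intU _ _ (by omega) (by omega) (by omega) (by omega)) hm)).trans
            (baseU _ _ (by omega) (by omega) (by omega) (by omega))
        by_cases c4 : x = X2 ∧ y = Y1
        · have hm : (x, y + 1, false) ∈ D := by apply loD <;> rw [hR] <;> omega
          exact ((stepC x y hv hm).trans
            (stepB' _ _ (intU _ _ (by omega) (by omega) (by omega) (by omega)) hm)).trans
            (baseU _ _ (by omega) (by omega) (by omega) (by omega))
        have hm : (x, y, false) ∈ D := by apply loD <;> rw [hR] <;> omega
        by_cases c5 : x = X2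
        · exact ((stepA x y hv hm).trans
            (stepB' _ _ (intU _ _ (by omega) (by omega) (by omega) (by omega)) hm)).trans
            (baseU _ _ (by omega) (by omega) (by omega) (by omega))
        · exact ((stepA x y hv hm).trans
            (stepC' _ _ (intU _ _ (by omega) (by omega) (by omega) (by omega)) hm)).trans
            (baseU _ _ (by omega) (by omega) (by omega) (by omega))
      | false =>
        by_cases c1 : X1 + 1 < x ∧ Y1 < y ∧ y < Y2
        · exact (stepB' x y (intU _ _ (by omega) (by omega) (by omega) (by omega)) hv).trans
            (baseU _ _ (by omega) (by omega) (by omega) (by omega))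
        by_cases c2 : Y1 + 1 < y ∧ X1 < x ∧ x < X2
        · exact (stepC' x y (intU _ _ (by omega) (by omega) (by omega) (by omega)) hv).trans
            (baseU _ _ (by omega) (by omega) (by omega) (by omega))
        by_cases c3 : x = X2 ∧ y = Y1
        · have hm : (x - 1, y, true) ∈ D := by apply upD <;> rw [hR] <;> omega
          exact ((stepB' x y hm hv).trans
            (stepC _ _ hm (intL _ _ (by omega) (by omega) (by omega) (by omega)))).trans
            (baseL _ _ (by omega) (by omega) (by omega) (by omega))
        by_cases c4 : x = X1 ∧ y = Y2
        · have hm : (x, y - 1, true) ∈ D := by apply upD <;> rw [hR] <;> omega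
          exact ((stepC' x y hm hv).trans
            (stepB _ _ hm (intL _ _ (by omega) (by omega) (by omega) (by omega)))).trans
            (baseL _ _ (by omega) (by omega) (by omega) (by omega))
        have hm : (x, y, true) ∈ D := by apply upD <;> rw [hR] <;> omega
        by_cases c5 : x = X1
        · exact ((conn_symm (stepA x y hm hv)).trans
            (stepB _ _ hm (intL _ _ (by omega) (by omega) (by omega) (by omega)))).trans
            (baseL _ _ (by omega) (by omega) (by omega) (by omega))
        · exact ((conn_symm (stepA x y hm hv)).trans
            (stepC _ _ hm (intL _ _ (by omega) (by omega) (by omega) (by omega)))).trans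
            (baseL _ _ (by omega) (by omega) (by omega) (by omega))
    intro v hv v' hv'
    exact (base v hv).trans (conn_symm (base v' hv'))

open MeasureTheory

lemma fill0 (s : Bool) : FillProp ![s, !s, !s] (1, 1) := by
  rintro ω hω ⟨p, q, t⟩ ⟨p', q', t'⟩ ht ht' hf hf' K
  obtain rfl : t = false := ht
  obtain rfl : t' = true := ht'
  obtain ⟨M, hM⟩ : ∃ M : ℕ, (K : Set HexV) ⊆ box M 0 0 := by
    refine ⟨∑ v ∈ K, (v.1.natAbs + v.2.1.natAbs), fun v hv => ?_⟩
    exact box_mono (Finset.single_le_sum (f := fun v : HexV => v.1.natAbs + v.2.1.natAbs)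
      (fun _ _ => Nat.zero_le _) hv) 0 0 (mem_box_norm v)
  obtain ⟨k, hk, hkS⟩ := Filter.frequently_atTop.1 hf (M + 2 + p.natAbs + q.natAbs)
  obtain ⟨k', hk', hkS'⟩ := Filter.frequently_atTop.1 hf' (M + 2 + p'.natAbs + q'.natAbs)
  have e1 : shiftV (k • ((1, 1) : ℤ × ℤ)) (p, q, false) = (p + k, q + k, false) := by
    simp [shiftV]
  have e2 : shiftV (k' • (-(1, 1) : ℤ × ℤ)) (p', q', true) = (p' - k', q' - k', true) := by
    simp [shiftV, sub_eq_add_neg]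
  rw [e1] at hkS
  rw [e2] at hkS'
  let R : Finset HexV := ((Finset.Icc (p' - k') (p + k)) ×ˢ ((Finset.Icc (q' - k') (q + k)) ×ˢ
    (Finset.univ : Finset Bool))).filter (fun v => ¬ (v.1 = p + k ∧ v.2.1 = q + k) ∧
      ¬ (v.1 = p' - k' ∧ v.2.1 = q' - k'))
  have hR : ∀ x y t, (x, y, t) ∈ R ↔ p' - k' ≤ x ∧ x ≤ p + k ∧ q' - k' ≤ y ∧ y ≤ q + k ∧
      ¬ (x = p + k ∧ y = q + k) ∧ ¬ (x = p' - k' ∧ y = q' - k') := by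
    intro x y t
    simp only [R, Finset.mem_filter, Finset.mem_product, Finset.mem_Icc, Finset.mem_univ, and_true]
    tauto
  obtain ⟨h1, h2⟩ := fill_rect s ω hω (p' - k') (p + k) (q' - k') (q + k) (by omega) (by omega)
    hkS hkS' R hR
  refine ⟨R, ?_, fillC R _ ω, h1, ?_, fillC_sub _ _ _, fillC_sup _ _ _, h2⟩
  · rintro ⟨x, y, t⟩ hv
    have hv : _ ≤ _ ∧ _ ≤ _ := hM hv
    simp only [abs_le, sub_zero] at hv
    rw [hR]
    omega
  · intro e he
    rw [fillC, if_neg]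
    tauto

/-- rotation by 120 degrees on vertices -/
def rotV : HexV ≃ HexV where
  toFun v := if v.2.2 then (-v.1 - v.2.1, v.1, v.2.2) else (1 - v.1 - v.2.1, v.1, v.2.2)
  invFun v := if v.2.2 then (v.2.1, -v.1 - v.2.1, v.2.2) else (v.2.1, 1 - v.1 - v.2.1, v.2.2)
  left_inv := by rintro ⟨x, y, t⟩; cases t <;> simp <;> ring
  right_inv := by rintro ⟨x, y, t⟩; cases t <;> simp <;> ring

/-- rotation on edges -/
def rotE : HexE ≃ HexE where
  toFun e := (-e.1 - e.2.1, e.1, e.2.2 + 1)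
  invFun e := (e.2.1, -e.1 - e.2.1, e.2.2 - 1)
  left_inv := by rintro ⟨x, y, k⟩; simp
  right_inv := by rintro ⟨x, y, k⟩; simp <;> ring

lemma rot_end1 (e : HexE) : end1 (rotE e) = rotV (end1 e) := by
  simp [end1, rotE, rotV]

lemma rot_end2 (e : HexE) : end2 (rotE e) = rotV (end2 e) := by
  obtain ⟨x, y, k⟩ := e
  fin_cases k <;> simp [end2, rotE, rotV] <;> ring

lemma rot_edgesAt (v : HexV) (i : Fin 3) : edgesAt (rotV v) (i + 1) = rotE (edgesAt v i) := by
  obtain ⟨x, y, t⟩ := v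
  cases t <;> fin_cases i <;> simp [edgesAt, rotE, rotV] <;> ring

lemma rot_type (v : HexV) : (rotV v).2.2 = v.2.2 := by
  obtain ⟨x, y, t⟩ := v
  cases t <;> simp [rotV]

lemma rot_adj {x y : HexV} (h : HexAdj x y) : HexAdj (rotV x) (rotV y) := by
  obtain ⟨h1, e, h2, h3⟩ := h
  refine ⟨fun h => h1 (rotV.injective h), rotE e, ?_, ?_⟩
  · rw [rot_end1, rot_end2]
    simpa using h2
  · rw [rot_end1, rot_end2]
    simpa using h3

lemma rot_aut : IsAut rotV := by
  intro x y
  refine ⟨rot_adj, ?_⟩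
  rintro ⟨h1, e, h2, h3⟩
  refine ⟨fun h => h1 (by rw [h]), rotE.symm e, ?_, ?_⟩
  · have a1 := rot_end1 (rotE.symm e)
    have a2 := rot_end2 (rotE.symm e)
    rw [Equiv.apply_symm_apply] at a1 a2
    rw [a1, a2] at h2
    simpa using h2
  · have a1 := rot_end1 (rotE.symm e)
    have a2 := rot_end2 (rotE.symm e)
    rw [Equiv.apply_symm_apply] at a1 a2
    rw [a1, a2] at h3
    simpa using h3

def rotL (g : ℤ × ℤ) : ℤ × ℤ := (-g.1 - g.2, g.1)

lemma rot_shift (g : ℤ × ℤ) (v : HexV) : rotV (shiftV g v) = shiftV (rotL g) (rotV v) := by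
  obtain ⟨x, y, t⟩ := v
  cases t <;> simp [rotV, shiftV, rotL] <;> ring

lemma rotL_smul (k : ℕ) (g : ℤ × ℤ) : rotL (k • g) = k • rotL g := by
  simp [rotL]; ring

lemma rotL_neg (g : ℤ × ℤ) : rotL (-g) = -rotL g := by
  simp [rotL]; ring

def rotT (τ : Fin 3 → Bool) : Fin 3 → Bool := fun i => τ (i - 1)

lemma rot_localConf (ω : Config) (v : HexV) (i : Fin 3) :
    localConf (fun e => ω (rotE e)) v i = localConf ω (rotV v) (i + 1) := by
  simp only [localConf, rot_edgesAt]

lemma rot_confSet (ω : Config) (τ : Fin 3 → Bool) :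
    confSet (fun e => ω (rotE e)) τ = rotV ⁻¹' confSet ω (rotT τ) := by
  ext v
  change _ = _ ↔ _ = _
  rw [funext_iff, funext_iff]
  constructor
  · intro h i
    have := h (i - 1)
    rw [rot_localConf] at this
    simpa [rotT] using this
  · intro h i
    rw [rot_localConf, h (i + 1)]
    simp [rotT]

lemma rot_isConfig (ω : Config) : IsConfig (fun e => ω (rotE e)) ↔ IsConfig ω := by
  rw [isConfig_iff, isConfig_iff]
  constructor
  · intro h v
    obtain ⟨i, j, hij⟩ := h (rotV.symm v)
    rw [rot_localConf, rot_localConf, Equiv.apply_symm_apply] at hij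
    exact ⟨_, _, hij⟩
  · intro h v
    obtain ⟨i, j, hij⟩ := h (rotV v)
    refine ⟨i - 1, j - 1, ?_⟩
    rw [rot_localConf, rot_localConf]
    simpa using hij

lemma fill_rot {τ : Fin 3 → Bool} {g : ℤ × ℤ} (h : FillProp τ g) : FillProp (rotT τ) (rotL g) := by
  intro ω hω v₁ v₂ h1 h2 hf1 hf2 K
  have t : ∀ v, (rotV.symm v).2.2 = v.2.2 := fun v => by
    rw [← rot_type (rotV.symm v), Equiv.apply_symm_apply]
  obtain ⟨R, hKR, ω', hω', hoff, hs1, hs2, hcon⟩ := h (fun e => ω (rotE e)) ((rot_isConfig ω).2 hω)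
    (rotV.symm v₁) (rotV.symm v₂) ((t _).trans h1) ((t _).trans h2)
    (hf1.mono fun k hk => by
      rw [rot_confSet, Set.mem_preimage, rot_shift, rotL_smul, Equiv.apply_symm_apply]; exact hk)
    (hf2.mono fun k hk => by
      rw [rot_confSet, Set.mem_preimage, rot_shift, rotL_smul, rotL_neg, Equiv.apply_symm_apply]
      exact hk)
    (K.map rotV.symm.toEmbedding)
  have hR : ∀ v, v ∈ R.map rotV.toEmbedding ↔ rotV.symm v ∈ R := by
    intro v; simp [Finset.mem_map_equiv]
  have hc : confSet ω' τ = rotV ⁻¹' confSet (fun e => ω' (rotE.symm e)) (rotT τ) := by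
    have := rot_confSet (fun e => ω' (rotE.symm e)) τ
    simpa using this
  have hω' : IsConfig (fun e => ω' (rotE.symm e)) := (rot_isConfig _).1 (by simpa using hω')
  rw [rot_confSet] at hs1 hs2
  rw [hc] at hs1 hs2 hcon
  refine ⟨R.map rotV.toEmbedding, ?_, fun e => ω' (rotE.symm e), hω', ?_, ?_, ?_, ?_⟩
  · intro v hv
    rw [hR]
    apply hKR
    simpa using hv
  · intro e he
    rw [hR, hR] at he
    have a1 := rot_end1 (rotE.symm e)
    have a2 := rot_end2 (rotE.symm e)
    rw [Equiv.apply_symm_apply] at a1 a2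
    rw [a1, a2, Equiv.symm_apply_apply, Equiv.symm_apply_apply] at he
    simpa using hoff _ he
  · intro v hv
    have := @hs1 (rotV.symm v) (by simpa using hv)
    simpa using this
  · intro v hv
    have := @hs2 (rotV.symm v) (by simpa using hv)
    rcases this with h | h
    · left; simpa using h
    · right; exact (hR v).2 h
  · have e : ∀ A : Set HexV, rotV ⁻¹' A ∩ (R : Set HexV) =
        rotV ⁻¹' (A ∩ (R.map rotV.toEmbedding : Finset HexV)) := by
      intro A; ext v
      simp
    rw [e] at hcon
    intro x hx y hy
    have := hcon (rotV.symm x) (by rw [Set.mem_preimage, Equiv.apply_symm_apply]; exact hx)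
      (rotV.symm y) (by rw [Set.mem_preimage, Equiv.apply_symm_apply]; exact hy)
    rw [conn_map_iff rot_aut, Equiv.apply_symm_apply, Equiv.apply_symm_apply] at this
    exact this

lemma fill_all (τ : Fin 3 → Bool) (hτ : validConf τ) : ∃ g, FillProp τ g := by
  have : ∀ τ : Fin 3 → Bool, (τ ≠ ![false, false, false] ∧ τ ≠ ![true, true, true]) →
      ∃ s : Bool, τ = ![s, !s, !s] ∨ τ = rotT ![s, !s, !s] ∨ τ = rotT (rotT ![s, !s, !s]) := by
    unfold rotT
    decide
  obtain ⟨s, rfl | rfl | rfl⟩ := this τ hτ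
  · exact ⟨_, fill0 s⟩
  · exact ⟨_, fill_rot (fill0 s)⟩
  · exact ⟨_, fill_rot (fill_rot (fill0 s))⟩

open MeasureTheory

lemma ae_config {a b c : ℝ} {μ : Measure Config} (hG : IsGibbs a b c μ) : ∀ᵐ ω ∂μ, IsConfig ω := by
  obtain ⟨hprob, hΩ, -⟩ := hG
  rw [← prob_compl_eq_zero_iff₀] at hΩ
  · exact hΩ
  · refine MeasurableSet.nullMeasurableSet ?_
    apply measurableSet_setOfPred.2
    refine Measurable.forall fun v => ?_
    have hm : Measurable fun ω : Config => localConf ω v := by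
      rw [measurable_pi_iff]; intro i; exact measurable_pi_apply _
    exact (measurable_of_countable (fun f : Fin 3 → Bool =>
      1 ≤ (Finset.univ.filter fun i : Fin 3 => f i = true).card ∧
      (Finset.univ.filter fun i : Fin 3 => f i = true).card ≤ 2)).comp hm

lemma shift_iter (g : ℤ × ℤ) (k : ℕ) (ω : Config) :
    (shiftConfig g)^[k] ω = shiftConfig (k • g) ω := by
  induction k with
  | zero => funext e; simp [shiftConfig, shiftE]
  | succ k ih =>
    rw [Function.iterate_succ_apply', ih]
    funext e
    simp only [shiftConfig, shiftE, succ_nsmul', Prod.fst_add, Prod.snd_add]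
    congr 1
    ext <;> simp <;> ring

lemma recur {μ : Measure Config} [IsProbabilityMeasure μ] (hTI : TransInvariant μ)
    (τ : Fin 3 → Bool) (g : ℤ × ℤ) : ∀ᵐ ω ∂μ, ∀ v, v ∈ confSet ω τ →
      ∃ᶠ k : ℕ in Filter.atTop, shiftV (k • g) v ∈ confSet ω τ := by
  rw [ae_all_iff]
  intro v
  have hmp : MeasurePreserving (shiftConfig g) μ μ := ⟨measurable_shiftConfig g, hTI g⟩
  have hs : MeasurableSet {ω | v ∈ confSet ω τ} := measurableSet_setOfPred.2 (meas_confSet τ v)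
  filter_upwards [hmp.conservative.ae_mem_imp_frequently_image_mem hs.nullMeasurableSet] with ω h hv
  refine (h hv).mono fun k hk => ?_
  rw [shift_iter, confSet_shift] at hk
  exact hk

lemma adj_type {x y : HexV} (h : HexAdj x y) : y.2.2 = !x.2.2 := by
  obtain ⟨h1, e, h2, h3⟩ := h
  have t2 : (end2 e).2.2 = false := by
    simp only [end2]; split_ifs <;> rfl
  have t1 : (end1 e).2.2 = true := rfl
  rcases h2 with rfl | rfl <;> rcases h3 with rfl | rfl
  · exact absurd rfl h1
  · rw [t1, t2]; rfl
  · rw [t1, t2]; rfl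
  · exact absurd rfl h1

lemma both_types {S : Set HexV} {u : HexV} (hinf : (compOf S u).Infinite) :
    ∃ v₁ ∈ S, ∃ v₂ ∈ S, v₁.2.2 = false ∧ v₂.2.2 = true := by
  obtain ⟨y, hy, hne⟩ := hinf.exists_notMem_finite (Set.finite_singleton u)
  rcases Relation.ReflTransGen.cases_head hy with rfl | ⟨z, hz, -⟩
  · exact absurd rfl hne
  · have t := adj_type hz.1
    cases hu : u.2.2
    · exact ⟨u, hz.2.1, z, hz.2.2, hu, by rw [t, hu]; rfl⟩
    · exact ⟨z, hz.2.2, u, hz.2.1, by rw [t, hu]; rfl, hu⟩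

def FR (R : Finset HexV) : Finset HexE := R.biUnion fun v => Finset.univ.image (edgesAt v)

lemma notMem_FR {R : Finset HexV} {e : HexE} (h : e ∉ FR R) : end1 e ∉ R := by
  intro h1
  apply h
  obtain ⟨i, hi⟩ := edgesAt_of_end e (end1 e) (Or.inl rfl)
  rw [FR, Finset.mem_biUnion]
  exact ⟨_, h1, Finset.mem_image.2 ⟨i, Finset.mem_univ _, hi⟩⟩

/-- at least two infinite clusters -/
def I2 (τ : Fin 3 → Bool) : Set Config :=
  {ω | ∃ u₁ u₂ : HexV, (u₁ ∈ confSet ω τ ∧ u₂ ∈ confSet ω τ) ∧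
    ((compOf (confSet ω τ) u₁).Infinite ∧ (compOf (confSet ω τ) u₂).Infinite) ∧
    ¬ Conn (confSet ω τ) u₁ u₂}

lemma meas_I2 (τ : Fin 3 → Bool) : MeasurableSet (I2 τ) := by
  apply measurableSet_setOfPred.2
  refine Measurable.exists fun u₁ => Measurable.exists fun u₂ => ?_
  exact ((meas_confSet τ u₁).and (meas_confSet τ u₂)).and
    (((meas_inf (meas_confSet τ) u₁).and (meas_inf (meas_confSet τ) u₂)).and
      (meas_conn (meas_confSet τ) u₁ u₂).not)

lemma I2_shift (τ : Fin 3 → Bool) (g : ℤ × ℤ) : shiftConfig g ⁻¹' I2 τ = I2 τ := by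
  ext ω
  simp only [I2, Set.mem_preimage, Set.mem_setOf_eq, confSet_shift, conn_map_iff (shiftV_aut g),
    compOf_inf_iff (shiftV_aut g)]
  constructor
  · rintro ⟨u₁, u₂, h⟩
    exact ⟨_, _, h⟩
  · rintro ⟨u₁, u₂, h⟩
    exact ⟨(shiftV g).symm u₁, (shiftV g).symm u₂, by simpa only [Equiv.apply_symm_apply] using h⟩

lemma num_le_of_notMem {τ : Fin 3 → Bool} {ω : Config} (h : ω ∉ I2 τ) : numInfClusters ω τ ≤ 1 := by
  rw [numInfClusters, Set.encard_le_one_iff]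
  rintro _ _ ⟨⟨u, hu, rfl⟩, hui⟩ ⟨⟨v, hv, rfl⟩, hvi⟩
  have hc : Conn (confSet ω τ) u v := by
    by_contra hc
    exact h ⟨u, v, ⟨hu, hv⟩, ⟨hui, hvi⟩, hc⟩
  ext w
  exact ⟨fun h => (conn_symm hc).trans h, fun h => hc.trans h⟩

open Classical in
lemma dichotomy {τ : Fin 3 → Bool} {g : ℤ × ℤ} (hF : FillProp τ g) {ω : Config} (hω : IsConfig ω)
    (r1 : ∀ v, v ∈ confSet ω τ → ∃ᶠ k : ℕ in Filter.atTop, shiftV (k • g) v ∈ confSet ω τ)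
    (r2 : ∀ v, v ∈ confSet ω τ → ∃ᶠ k : ℕ in Filter.atTop, shiftV (k • (-g)) v ∈ confSet ω τ)
    (h2 : ω ∈ I2 τ) : ∃ R : Finset HexV, ∃ ω', (ω' ∈ Trif τ R ∨ ω' ∉ I2 τ) ∧ IsConfig ω' ∧
      ∀ e ∉ FR R, ω' e = ω e := by
  obtain ⟨u₁, u₂, ⟨m1, m2⟩, ⟨i1, i2⟩, hn⟩ := h2
  obtain ⟨v₁, hv₁, v₂, hv₂, t1, t2⟩ := both_types i1
  have hfill := hF ω hω v₁ v₂ t1 t2 (r1 _ hv₁) (r2 _ hv₂)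
  by_cases h3 : ∃ u₃, (compOf (confSet ω τ) u₃).Infinite ∧ ¬ Conn (confSet ω τ) u₁ u₃ ∧
      ¬ Conn (confSet ω τ) u₂ u₃
  · obtain ⟨u₃, i3, n1, n2⟩ := h3
    obtain ⟨R, hK, ω', hω', hoff, hs1, hs2, hcon⟩ := hfill {u₁, u₂, u₃}
    refine ⟨R, ω', Or.inl ?_, hω', fun e he => hoff e (Or.inl (notMem_FR he))⟩
    obtain ⟨w, hw⟩ := trif_of_fill R.finite_toSet hs1 hs2 hcon ![u₁, u₂, u₃]
      (by intro i; apply hK; fin_cases i <;> simp)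
      (by intro i; fin_cases i <;> assumption)
      (by
        intro i j hij
        fin_cases i <;> fin_cases j
        · exact absurd rfl hij
        · exact hn
        · exact n1
        · exact fun h => hn (conn_symm h)
        · exact absurd rfl hij
        · exact n2
        · exact fun h => n1 (conn_symm h)
        · exact fun h => n2 (conn_symm h)
        · exact absurd rfl hij)
    refine ⟨R.filter (fun v => v ∈ confSet ω' τ), Finset.filter_subset _ _, w, ?_⟩
    have e : ((R.filter (fun v => v ∈ confSet ω' τ) : Finset HexV) : Set HexV) =
        confSet ω' τ ∩ R := by
      ext v; simp [and_comm]
    rw [e]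
    exact hw
  · push Not at h3
    obtain ⟨R, hK, ω', hω', hoff, hs1, hs2, hcon⟩ := hfill {u₁, u₂}
    refine ⟨R, ω', Or.inr ?_, hω', fun e he => hoff e (Or.inl (notMem_FR he))⟩
    rintro ⟨x, y, ⟨hx, hy⟩, ⟨ix, iy⟩, hxy⟩
    refine hxy (merge_of_fill hs1 hs2 hcon ?_ x hx y hy ix iy)
    intro v hv iv
    by_cases hc : Conn (confSet ω τ) u₁ v
    · exact ⟨u₁, ⟨hK (by simp), m1⟩, conn_symm hc⟩
    · exact ⟨u₂, ⟨hK (by simp), m2⟩, conn_symm (h3 v iv hc)⟩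

/-- For any translation-invariant Gibbs measure `μ` for the 1-2 model (with any
weights `a, b, c > 0`) and any of the six local configuration types `τ₀`, `μ`-almost every
1-2 model configuration has at most one infinite `τ₀`-cluster. -/
theorem at_most_one_infinite_homogeneous_cluster
    (a b c : ℝ) (ha : 0 < a) (hb : 0 < b) (hc : 0 < c)
    (μ : Measure Config) (hGibbs : IsGibbs a b c μ) (hTI : TransInvariant μ)
    (τ₀ : Fin 3 → Bool) (hτ₀ : validConf τ₀) :
    μ {ω : Config | IsConfig ω ∧ numInfClusters ω τ₀ ≤ 1} = 1 := by
  haveI := hGibbs.1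
  obtain ⟨g, hF⟩ := fill_all τ₀ hτ₀
  have hA3 : ∀ R : Finset HexV, ∀ᵐ ω ∂μ, ¬ (IsConfig ω ∧ ∃ ω' ∈ Trif τ₀ R, IsConfig ω' ∧
      ∀ e ∉ FR R, ω' e = ω e) := by
    intro R
    obtain ⟨K, hK, hmod⟩ := mod_lemma ha hb hc hGibbs (FR R)
    have := hmod {ω | IsConfig ω ∧ ∃ ω' ∈ Trif τ₀ R, IsConfig ω' ∧ ∀ e ∉ FR R, ω' e = ω e}
      (Trif τ₀ R) (meas_Trif τ₀ R) (fun ω hω => hω)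
    rw [trif_null hTI, mul_zero] at this
    rw [ae_iff]
    simpa using this
  have hA2 : ∀ R : Finset HexV, ∀ᵐ ω ∂μ, ¬ (ω ∈ I2 τ₀ ∧ IsConfig ω ∧ ∃ ω', ω' ∉ I2 τ₀ ∧
      IsConfig ω' ∧ ∀ e ∉ FR R, ω' e = ω e) := by
    intro R
    have := tail_lemma ha hb hc hGibbs hTI (FR R) (meas_I2 τ₀) (I2_shift τ₀)
      (A := {ω | ω ∈ I2 τ₀ ∧ IsConfig ω ∧ ∃ ω', ω' ∉ I2 τ₀ ∧
        IsConfig ω' ∧ ∀ e ∉ FR R, ω' e = ω e}) (fun ω h => h.1) (fun ω h => h.2)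
    rw [ae_iff]
    simpa only [not_not] using this
  have hae : ∀ᵐ ω ∂μ, IsConfig ω ∧ numInfClusters ω τ₀ ≤ 1 := by
    filter_upwards [ae_config hGibbs, recur hTI τ₀ g, recur hTI τ₀ (-g), ae_all_iff.2 hA3,
      ae_all_iff.2 hA2] with ω h1 h2 h3 h4 h5
    refine ⟨h1, num_le_of_notMem fun hI => ?_⟩
    obtain ⟨R, ω', h | h, hω', hoff⟩ := dichotomy hF h1 h2 h3 hI
    · exact h4 R ⟨h1, ω', h, hω', hoff⟩
    · exact h5 R ⟨hI, h1, ω', h, hω', hoff⟩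
  rw [measure_congr (Filter.eventuallyEq_univ.2 hae)]
  exact measure_univ
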